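/- arXiv:1412.6364 — 4 statements merged into one kernel-verified Lean document; each statement's English description precedes it below -/
import Mathlib

section
/- Let λ be an even partition of length r. For every fixed integer k, the real zeros of the exceptional Hermite polynomials of even degree satisfy the scaling limit lim_{n→∞} 2√n · x_{k+n+1−|λ|/2, 2n} = π/2 + kπ, where x_{1,m} < x_{2,m} < ⋯ < x_{m−|λ|,m} denote the real zeros of P_m arranged in increasing order (for m ≥ |λ|+λ_1 there are exactly m−|λ| of them). -/
open Polynomial

/-- The physicists' Hermite polynomials: `H 0 = 1`, `H (n+1) = 2X * H n - (H n)'`. -/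
noncomputable def physHermite : ℕ → Polynomial ℝ
  | 0 => 1
  | n + 1 => 2 * X * physHermite n - derivative (physHermite n)

/-- Wronskian determinant of a finite family of polynomials. -/
noncomputable def Wron {m : ℕ} (f : Fin m → Polynomial ℝ) : Polynomial ℝ :=
  Matrix.det (Matrix.of fun i j : Fin m => (fun p => derivative p)^[(i : ℕ)] (f j))

/-- `lam : Fin r → ℕ` is a partition: weakly decreasing with positive parts. -/
def IsPartition (r : ℕ) (lam : Fin r → ℕ) : Prop :=
  (∀ i j : Fin r, i ≤ j → lam j ≤ lam i) ∧ ∀ i, 1 ≤ lam i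

/-- An even (double) partition: `r` even and `λ_{2k-1} = λ_{2k}`. -/
def IsEvenPartition (r : ℕ) (lam : Fin r → ℕ) : Prop :=
  IsPartition r lam ∧ Even r ∧
    ∀ k : ℕ, ∀ h : 2 * k + 1 < r, lam ⟨2 * k, by omega⟩ = lam ⟨2 * k + 1, h⟩

/-- The generalized Hermite polynomial `H_λ = Wr[H_{λ_r}, H_{λ_{r-1}+1}, …, H_{λ_1+r-1}]`. -/
noncomputable def genHermite (r : ℕ) (lam : Fin r → ℕ) : Polynomial ℝ :=
  Wron fun j : Fin r => physHermite (lam (Fin.rev j) + j)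

/-- The exceptional Hermite polynomial
`P_n = Wr[H_{λ_r}, H_{λ_{r-1}+1}, …, H_{λ_1+r-1}, H_{n-|λ|+r}]`. -/
noncomputable def XHermite (r : ℕ) (lam : Fin r → ℕ) (n : ℕ) : Polynomial ℝ :=
  Wron fun j : Fin (r + 1) =>
    if h : (j : ℕ) < r then physHermite (lam (Fin.rev ⟨(j : ℕ), h⟩) + j)
    else physHermite (n + r - ∑ i, lam i)

/-- The degree sequence `N_λ`: `n ≥ |λ| - r` and `n ≠ |λ| + λ_j - j` for `j = 1, …, r`. -/
def XDegSeq (r : ℕ) (lam : Fin r → ℕ) (n : ℕ) : Prop :=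
  (∑ i, lam i) ≤ n + r ∧ ∀ i : Fin r, n ≠ (∑ i, lam i) + lam i - ((i : ℕ) + 1)

open Filter Topology

/-! ### Hermite polynomials -/

lemma physH_deriv (n : ℕ) : derivative (physHermite (n+1)) = C (2 * ((n:ℝ)+1)) * physHermite n := by
  induction n with
  | zero => simp [physHermite]; rfl
  | succ n ih =>
    have h1 : physHermite (n+2) = 2 * X * physHermite (n+1) - derivative (physHermite (n+1)) := rfl
    have h2 : physHermite (n+1) = 2 * X * physHermite n - derivative (physHermite n) := rfl
    rw [h1]
    have : derivative (2 * X * physHermite (n+1) - derivative (physHermite (n+1)))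
      = 2 * physHermite (n+1) + 2 * X * derivative (physHermite (n+1))
        - derivative (derivative (physHermite (n+1))) := by
      simp only [derivative_sub, derivative_mul, derivative_X, derivative_ofNat]; ring
    rw [this, ih]
    simp only [derivative_mul, derivative_C, zero_mul, zero_add]
    have h3 : derivative (physHermite n) = 2 * X * physHermite n - physHermite (n+1) := by rw [h2]; ring
    rw [h3]
    push_cast
    simp only [map_mul, map_add, map_one, map_natCast, map_ofNat]
    ring

lemma physH_ode (n : ℕ) : derivative (derivative (physHermite n)) =
    2 * X * derivative (physHermite n) - C (2 * (n:ℝ)) * physHermite n := by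
  cases n with
  | zero => simp [physHermite]
  | succ n =>
    have h2 : physHermite (n+1) = 2 * X * physHermite n - derivative (physHermite n) := rfl
    rw [physH_deriv]
    simp only [derivative_mul, derivative_C, zero_mul, zero_add]
    rw [h2]
    push_cast
    ring

lemma physH_ode_iter (n k : ℕ) : derivative^[k+2] (physHermite n) =
    2 * X * derivative^[k+1] (physHermite n)
      - C (2 * ((n:ℝ) - k)) * derivative^[k] (physHermite n) := by
  induction k with
  | zero => simpa using physH_ode n
  | succ k ih =>
    have e0 : derivative^[k+1+2] (physHermite n) = derivative (derivative^[k+2] (physHermite n)) :=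
      Function.iterate_succ_apply' _ _ _
    have e1 : derivative (derivative^[k+1] (physHermite n)) = derivative^[k+1+1] (physHermite n) :=
      (Function.iterate_succ_apply' _ _ _).symm
    have e2 : derivative (derivative^[k] (physHermite n)) = derivative^[k+1] (physHermite n) :=
      (Function.iterate_succ_apply' _ _ _).symm
    rw [e0]
    conv_lhs => rw [ih]
    simp only [derivative_sub, derivative_mul, derivative_X, derivative_ofNat, derivative_C, e1, e2]
    push_cast
    simp only [map_mul, map_sub, map_add, map_one, map_natCast, map_ofNat]
    ring

/-- derivatives at zero -/
noncomputable def DD (n k : ℕ) : ℝ := (derivative^[k] (physHermite n)).eval 0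

lemma DD_rec (n k : ℕ) : DD n (k+2) = -(2 * ((n:ℝ) - k)) * DD n k := by
  unfold DD; rw [physH_ode_iter]; simp

lemma physH_even (n : ℕ) (hn : Even n) : DD n 0 ≠ 0 ∧ DD n 1 = 0 := by
  obtain ⟨m, rfl⟩ := hn
  induction m with
  | zero => simp [DD, physHermite]
  | succ m ih =>
    have e : m + 1 + (m + 1) = (m+m) + 1 + 1 := by ring
    have h2 : physHermite (m+m+1+1) = 2 * X * physHermite (m+m+1) - derivative (physHermite (m+m+1)) := rfl
    have h3 : physHermite (m+m+1) = 2 * X * physHermite (m+m) - derivative (physHermite (m+m)) := rfl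
    have h1 : (physHermite (m+m+1)).eval 0 = 0 := by
      have := ih.2
      simp only [DD, Function.iterate_one] at this
      rw [h3]; simp [this]
    rw [e]
    constructor
    · have := ih.1
      simp only [DD, Function.iterate_zero, id] at this ⊢
      rw [h2, physH_deriv]
      simp only [eval_sub, eval_mul, eval_X, eval_C]
      have : ((m + m : ℕ):ℝ) + 1 ≠ 0 := by positivity
      simp_all
    · simp only [DD, Function.iterate_one]
      rw [physH_deriv]; simp [h1]

lemma physH_odd (n : ℕ) (hn : Odd n) : DD n 0 = 0 ∧ DD n 1 ≠ 0 := by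
  obtain ⟨m, rfl⟩ := hn
  have h := physH_even (2*m) (by simp)
  have h3 : physHermite (2*m+1) = 2 * X * physHermite (2*m) - derivative (physHermite (2*m)) := rfl
  constructor
  · have := h.2
    simp only [DD, Function.iterate_one, Function.iterate_zero, id] at this ⊢
    rw [h3]; simp [this]
  · have := h.1
    simp only [DD, Function.iterate_one, Function.iterate_zero, id] at this ⊢
    rw [physH_deriv]
    simp only [eval_mul, eval_C]
    have : ((2 * m : ℕ):ℝ) + 1 ≠ 0 := by positivity
    simp_all

lemma DD_prod (n b p : ℕ) : DD n (2*p+b) =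
    DD n b * ∏ q ∈ Finset.range p, (-(2 * ((n:ℝ) - (2*q+b)))) := by
  induction p with
  | zero => simp
  | succ p ih =>
    rw [Finset.prod_range_succ, ← mul_assoc, ← ih, show 2*(p+1)+b = (2*p+b)+2 by ring, DD_rec]
    push_cast; ring

lemma DD_eq_zero (n k : ℕ) (h : n < k) : DD n k = 0 := by
  have key : ∀ n k, n < k → derivative^[k] (physHermite n) = 0 := by
    intro n
    induction n with
    | zero =>
      intro k hk
      obtain ⟨k, rfl⟩ := Nat.exists_eq_add_of_lt hk
      simp [physHermite, Function.iterate_succ_apply]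
    | succ n ih =>
      intro k hk
      obtain ⟨k, rfl⟩ : ∃ j, k = j + 1 := ⟨k-1, by omega⟩
      rw [Function.iterate_succ_apply, physH_deriv, Polynomial.iterate_derivative_C_mul, ih k (by omega)]
      simp
  simp [DD, key n k h]

lemma hasSum_taylor (p : ℝ[X]) (t : ℝ) :
    HasSum (fun k : ℕ => (derivative^[k] p).eval 0 / (k.factorial : ℝ) * t^k) (p.eval t) := by
  have h : ∀ k : ℕ, (derivative^[k] p).eval 0 / (k.factorial : ℝ) = p.coeff k := by
    intro k
    rw [← coeff_zero_eq_eval_zero, coeff_iterate_derivative]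
    have : (k.factorial : ℝ) ≠ 0 := by positivity
    simp [Nat.descFactorial_self]
    field_simp
  simp only [h]
  rw [eval_eq_sum_range]
  apply hasSum_sum_of_ne_finset_zero
  intro b hb
  rw [Finset.mem_range, not_lt] at hb
  rw [coeff_eq_zero_of_natDegree_lt (by omega), zero_mul]

/-! ### parity -/

lemma physH_neg (n : ℕ) : (physHermite n).comp (-X) = C ((-1)^n) * physHermite n := by
  induction n with
  | zero => simp [physHermite]
  | succ n ih =>
    have h2 : physHermite (n+1) = 2 * X * physHermite n - derivative (physHermite n) := rfl
    have h3 : derivative ((physHermite n).comp (-X)) = - (derivative (physHermite n)).comp (-X) := by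
      rw [derivative_comp]; simp
    have h4 : (derivative (physHermite n)).comp (-X) = - (C ((-1)^n) * derivative (physHermite n)) := by
      rw [eq_neg_iff_add_eq_zero, ← neg_eq_zero, neg_add, ← h3, ih]
      simp
    rw [h2]
    simp only [sub_comp, mul_comp, X_comp, ih, h4, pow_succ, map_mul, map_neg, map_one]
    have : (2 : ℝ[X]).comp (-X) = 2 := by simp
    rw [this]; ring

lemma iter_neg (n i : ℕ) (t : ℝ) : (derivative^[i] (physHermite n)).eval (-t) =
    (-1)^i * ((-1)^n * (derivative^[i] (physHermite n)).eval t) := by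
  have h : ∀ i : ℕ, (derivative^[i] (physHermite n)).comp (-X) =
      C ((-1)^i * (-1)^n) * derivative^[i] (physHermite n) := by
    intro i
    induction i with
    | zero => simpa using physH_neg n
    | succ i ih =>
      have h3 : derivative ((derivative^[i] (physHermite n)).comp (-X)) =
        - (derivative^[i+1] (physHermite n)).comp (-X) := by
        rw [derivative_comp, Function.iterate_succ_apply']; simp
      rw [ih, derivative_C_mul, ← Function.iterate_succ_apply' (f := derivative)] at h3
      rw [← neg_eq_iff_eq_neg] at h3
      rw [← h3, pow_succ]
      simp
  have := congrArg (eval t) (h i)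
  simp only [eval_comp, eval_neg, eval_X, eval_mul, eval_C] at this
  rw [this]; ring

lemma Wron_neg {m : ℕ} (d : Fin m → ℕ) (t : ℝ)
    (h : (Wron fun j => physHermite (d j)).eval t = 0) :
    (Wron fun j => physHermite (d j)).eval (-t) = 0 := by
  unfold Wron at *
  have e : ∀ t : ℝ, eval t (Matrix.det (Matrix.of fun i j : Fin m =>
      (fun p => derivative p)^[(i : ℕ)] (physHermite (d j)))) =
      Matrix.det (Matrix.of fun i j : Fin m => (derivative^[(i : ℕ)] (physHermite (d j))).eval t) := by
    intro t
    rw [← coe_evalRingHom, RingHom.map_det]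
    rfl
  rw [e] at *
  simp only [iter_neg]
  have := Matrix.det_mul_column (fun i : Fin m => (-1:ℝ)^(i:ℕ)) (Matrix.of fun i j : Fin m => (-1)^(d j) * (derivative^[(i : ℕ)] (physHermite (d j))).eval t)
  simp only [Matrix.of_apply] at this
  rw [this]
  have := Matrix.det_mul_row (fun i : Fin m => (-1:ℝ)^(d i)) (Matrix.of fun i j : Fin m => (derivative^[(i : ℕ)] (physHermite (d j))).eval t)
  simp only [Matrix.of_apply] at this
  rw [this, h]; simp

lemma XH_neg (r : ℕ) (lam : Fin r → ℕ) (n : ℕ) (t : ℝ) (h : (XHermite r lam n).eval t = 0) :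
    (XHermite r lam n).eval (-t) = 0 := by
  have e : XHermite r lam n = Wron fun j : Fin (r+1) => physHermite
    (if h : (j : ℕ) < r then (lam (Fin.rev ⟨(j : ℕ), h⟩) + j) else (n + r - ∑ i, lam i)) := by
    unfold XHermite
    congr 1
    funext j
    split_ifs <;> rfl
  rw [e] at h ⊢
  exact Wron_neg _ _ h

/-! ### cofactor expansion -/
lemma XH_expand (r : ℕ) (lam : Fin r → ℕ) : ∃ c : Fin (r+1) → ℝ[X],
    c (Fin.last r) = genHermite r lam ∧ ∀ n, XHermite r lam n =
      ∑ i : Fin (r+1), c i * derivative^[(i:ℕ)] (physHermite (n + r - ∑ i, lam i)) := by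
  refine ⟨fun i => (-1)^((i:ℕ) + r) * Matrix.det (Matrix.of fun (a b : Fin r) =>
    derivative^[((i.succAbove a : Fin (r+1)) : ℕ)] (physHermite (lam (Fin.rev b) + b))), ?_, ?_⟩
  · simp only [Fin.succAbove_last, Fin.val_castSucc, Fin.val_last]
    rw [← two_mul, pow_mul]; simp [genHermite, Wron]
  · intro n
    unfold XHermite Wron
    rw [Matrix.det_succ_column _ (Fin.last r)]
    apply Finset.sum_congr rfl
    intro i _
    have : ((Matrix.of fun i j : Fin (r+1) => (fun p => derivative p)^[(i : ℕ)] (if h : (j : ℕ) < r then physHermite (lam (Fin.rev ⟨(j : ℕ), h⟩) + j)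
    else physHermite (n + r - ∑ i, lam i))).submatrix i.succAbove (Fin.last r).succAbove) = (Matrix.of fun (a b : Fin r) =>
    derivative^[((i.succAbove a : Fin (r+1)) : ℕ)] (physHermite (lam (Fin.rev b) + b))) := by
      ext1 a b
      simp
    rw [this]
    simp only [Matrix.of_apply, Fin.val_last, lt_irrefl, dite_false]
    ring

/-! ### nonvanishing of the generalized Hermite polynomial at zero -/

lemma degCmul (a : ℝ) (p : ℝ[X]) : degree (C a * p) ≤ degree p := by
  rw [← smul_eq_C_mul]; exact degree_smul_le _ _

lemma tri_indep (h b : ℕ) (w : ℕ → ℝ) (φ : Fin h → ℕ) (hφ : Function.Injective φ)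
    (hv : ∀ i, ∑ p ∈ Finset.range h, w p * ∏ q ∈ Finset.range p, (-(2 * ((φ i:ℝ) - (2*q+b)))) = 0) :
    ∀ p < h, w p = 0 := by
  set Q : ℝ[X] := ∑ p ∈ Finset.range h, C (w p) * ∏ q ∈ Finset.range p, (-(2 * (X - C (2*(q:ℝ)+b))))
    with hQ
  have hev : ∀ t : ℝ, Q.eval t =
      ∑ p ∈ Finset.range h, w p * ∏ q ∈ Finset.range p, (-(2 * (t - (2*q+b)))) := by
    intro t
    simp [hQ, eval_finsetSum, eval_prod]
  have hQ0 : Q = 0 := by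
    by_cases hh : h = 0
    · subst hh; simp [hQ]
    apply eq_zero_of_degree_lt_of_eval_index_eq_zero (s := Finset.univ) (v := fun i : Fin h => (φ i : ℝ))
    · intro a _ b _ hab
      simp only [Nat.cast_inj] at hab
      exact hφ hab
    · rw [Finset.card_univ, Fintype.card_fin, ← mem_degreeLT]
      apply Submodule.sum_mem
      intro p hp
      rw [mem_degreeLT]
      rw [Finset.mem_range] at hp
      refine lt_of_le_of_lt ?_ (show ((p : ℕ) : WithBot ℕ) < h by exact_mod_cast hp)
      refine (degCmul _ _).trans ?_
      refine (degree_prod_le _ _).trans ?_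
      refine (Finset.sum_le_card_nsmul _ _ 1 ?_).trans ?_
      · intro q _
        rw [degree_neg, show (2:ℝ[X]) = C 2 from rfl]
        exact (degCmul _ _).trans (degree_X_sub_C_le _)
      · simp
    · intro i _
      rw [hev]; exact hv i
  intro p
  induction p using Nat.strong_induction_on with
  | _ p ih =>
  intro hp
  have h1 := hev (2*p+b)
  rw [hQ0, eval_zero, Finset.sum_eq_single p] at h1
  · rw [eq_comm, mul_eq_zero] at h1
    refine h1.resolve_right ?_
    rw [← ne_eq, Finset.prod_ne_zero_iff]
    intro q hq
    rw [Finset.mem_range] at hq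
    have : (q:ℝ) < p := by exact_mod_cast hq
    have : -(2 * ((2*p+b:ℝ) - (2*q+b))) < 0 := by linarith
    exact this.ne
  · intro p' hp' hne
    rw [Finset.mem_range] at hp'
    rcases lt_or_gt_of_ne hne with hlt | hlt
    · rw [ih p' hlt hp', zero_mul]
    · rw [Finset.prod_eq_zero (Finset.mem_range.2 hlt) (by ring), mul_zero]
  · intro hh; exact absurd (Finset.mem_range.2 hp) hh

lemma sum_range_two_mul (h : ℕ) (f : ℕ → ℝ) :
    ∑ i ∈ Finset.range (2*h), f i = ∑ p ∈ Finset.range h, (f (2*p) + f (2*p+1)) := by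
  induction h with
  | zero => simp
  | succ h ih => rw [show 2*(h+1) = 2*h+1+1 by ring, Finset.sum_range_succ, Finset.sum_range_succ, ih,
      Finset.sum_range_succ]; ring

lemma genHermite_ne (r : ℕ) (lam : Fin r → ℕ) (hp : IsEvenPartition r lam) :
    (genHermite r lam).eval 0 ≠ 0 := by
  obtain ⟨⟨hmono, -⟩, ⟨h, hr⟩, hpair⟩ := hp
  have hr2 : r = 2 * h := by omega
  subst hr2
  intro h0
  have e : eval 0 (genHermite (2*h) lam) =
      Matrix.det (Matrix.of fun i j : Fin (2*h) => DD (lam (Fin.rev j) + j) i) := by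
    unfold genHermite Wron
    rw [← coe_evalRingHom, RingHom.map_det]
    rfl
  rw [e, ← Matrix.exists_vecMul_eq_zero_iff] at h0
  obtain ⟨v, hv0, hv⟩ := h0
  apply hv0
  set V : ℕ → ℝ := fun i => if hi : i < 2*h then v ⟨i, hi⟩ else 0 with hV
  have hv' : ∀ j : Fin (2*h), ∑ p ∈ Finset.range h,
      (V (2*p) * DD (lam (Fin.rev j) + j) (2*p) + V (2*p+1) * DD (lam (Fin.rev j) + j) (2*p+1)) = 0 := by
    intro j
    have := congrFun hv j
    simp only [Matrix.vecMul, dotProduct, Matrix.of_apply, Pi.zero_apply] at this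
    rw [← sum_range_two_mul h (fun i => V i * DD (lam (Fin.rev j) + j) i), ← this,
      ← Fin.sum_univ_eq_sum_range (fun i => V i * DD (lam (Fin.rev j) + j) i)]
    apply Finset.sum_congr rfl
    intro i _
    simp [hV]
  -- the pair values
  have hl : ∀ p : Fin h, lam (Fin.rev ⟨2*p+1, by omega⟩) = lam (Fin.rev ⟨2*p, by omega⟩) := by
    intro p
    have := hpair (h-1-p) (by omega)
    convert this using 2
    · simp [Fin.rev, Fin.ext_iff]; omega
    · simp [Fin.rev, Fin.ext_iff]; omega
  set l : Fin h → ℕ := fun p => lam (Fin.rev ⟨2*p, by omega⟩) with hldef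
  have hlm : Monotone l := by
    intro p q hpq
    apply hmono
    rw [Fin.rev_le_rev]
    simp only [Fin.mk_le_mk]
    have : (p:ℕ) ≤ q := hpq
    omega
  have key : ∀ b, b < 2 → ∀ p < h, V (2*p+b) = 0 := by
    intro b hb
    apply tri_indep h b (fun p => V (2*p+b)) (fun p => l p + 2*p + (l p + b) % 2)
    · have : StrictMono (fun p : Fin h => l p + 2*p + (l p + b) % 2) := by
        intro p q hpq
        have h1 := hlm hpq.le
        have : (p:ℕ) < q := hpq
        simp only
        omega
      exact this.injective
    · intro i
      set n := l i + 2*i + (l i + b) % 2 with hn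
      have hsum : ∑ p ∈ Finset.range h, (V (2*p) * DD n (2*p) + V (2*p+1) * DD n (2*p+1)) = 0 := by
        rcases Nat.mod_two_eq_zero_or_one (l i + b) with h1 | h1
        · have := hv' ⟨2*i, by omega⟩
          rw [hn, h1]; exact this
        · have := hv' ⟨2*i+1, by omega⟩
          rw [hl i] at this
          rw [hn, h1]; exact this
      have hsum2 : DD n b * ∑ p ∈ Finset.range h, V (2*p+b) *
          ∏ q ∈ Finset.range p, (-(2 * ((n:ℝ) - (2*q+b)))) = 0 := by
        rw [← hsum, Finset.mul_sum]
        apply Finset.sum_congr rfl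
        intro p _
        have h3 := DD_prod n b p
        have h40 := DD_prod n 0 p
        have h41 := DD_prod n 1 p
        interval_cases b
        · have := (physH_even n (by rw [Nat.even_iff]; omega)).2
          rw [h41, this, mul_left_comm, ← h3]; simp
        · have := (physH_odd n (by rw [Nat.odd_iff]; omega)).1
          rw [add_zero] at h40
          rw [h40, this, mul_left_comm, ← h3]; simp
      rw [mul_eq_zero] at hsum2
      refine hsum2.resolve_left ?_
      interval_cases b
      · exact (physH_even n (by rw [Nat.even_iff]; omega)).1
      · exact (physH_odd n (by rw [Nat.odd_iff]; omega)).2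
  funext i
  have h1 : V i = v i := by simp [hV]
  rw [← h1]
  have h2 := key (i % 2) (by omega) (i/2) (by omega)
  rw [Nat.div_add_mod] at h2
  exact h2

lemma sum_even (r : ℕ) (lam : Fin r → ℕ) (hp : IsEvenPartition r lam) : Even (∑ i, lam i) := by
  obtain ⟨-, ⟨h, hr⟩, hpair⟩ := hp
  have hr2 : r = 2 * h := by omega
  subst hr2
  set V : ℕ → ℕ := fun i => if hi : i < 2*h then lam ⟨i, hi⟩ else 0 with hV
  have e : ∑ i, lam i = ∑ i ∈ Finset.range (2*h), V i := by
    rw [← Fin.sum_univ_eq_sum_range]; simp [hV]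
  have hV2 : ∀ k, V (2*k) = V (2*k+1) ∨ h ≤ k := by
    intro k
    by_cases hk : h ≤ k
    · exact Or.inr hk
    · left
      have := hpair k (by omega)
      simp only [hV]
      rw [dif_pos (by omega), dif_pos (by omega)]; exact this
  rw [e]
  have : ∀ g ≤ h, Even (∑ i ∈ Finset.range (2*g), V i) := by
    intro g
    induction g with
    | zero => simp
    | succ g ih =>
      intro hg
      rw [show 2*(g+1) = 2*g+1+1 by ring, Finset.sum_range_succ, Finset.sum_range_succ]
      have := ih (by omega)
      have h2 := (hV2 g).resolve_right (by omega)
      rw [h2, add_assoc]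
      exact this.add ⟨_, rfl⟩
  exact this h le_rfl

/-! ### Mehler-Heine asymptotics -/

/-- derivatives of the cosine at zero -/
def ee : ℕ → ℝ
  | 0 => 1
  | 1 => 0
  | k + 2 => - ee k

noncomputable def GG (i : ℕ) (x : ℝ) : ℝ := ∑' k : ℕ, ee (k+i) * (x^k / (k.factorial : ℝ))

lemma ee_even (k : ℕ) : ee (2*k) = (-1)^k := by
  induction k with
  | zero => simp [ee]
  | succ k ih => rw [show 2*(k+1) = 2*k+2 by ring, ee, ih, pow_succ]; ring

lemma ee_odd (k : ℕ) : ee (2*k+1) = 0 := by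
  induction k with
  | zero => simp [ee]
  | succ k ih => rw [show 2*(k+1)+1 = 2*k+1+2 by ring, ee, ih]; ring

lemma GG_zero (x : ℝ) : GG 0 x = Real.cos x := by
  refine HasSum.tsum_eq ?_
  have := HasSum.even_add_odd (f := fun k : ℕ => ee (k+0) * (x^k / (k.factorial : ℝ)))
    (m := Real.cos x) (m' := 0) ?_ ?_
  · simpa using this
  · refine (Real.hasSum_cos x).congr_fun ?_ 
    intro k; simp [ee_even]; ring
  · simp [ee_odd, hasSum_zero]

lemma GG_one (x : ℝ) : GG 1 x = -Real.sin x := by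
  refine HasSum.tsum_eq ?_
  have := HasSum.even_add_odd (f := fun k : ℕ => ee (k+1) * (x^k / (k.factorial : ℝ)))
    (m := 0) (m' := -Real.sin x) ?_ ?_
  · simpa using this
  · simp [ee_odd, hasSum_zero]
  · refine (Real.hasSum_sin x).neg.congr_fun ?_
    intro k
    have : ee (2*k+1+1) = -(-1)^k := by
      rw [show 2*k+1+1 = 2*k+2 by ring, ee, ee_even]
    rw [this]; ring

lemma GG_add_two (i : ℕ) (x : ℝ) : GG (i+2) x = - GG i x := by
  unfold GG
  rw [← tsum_neg]
  congr 1; funext k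
  rw [← add_assoc, ee]; ring

lemma GG_even (i : ℕ) (x : ℝ) : GG (2*i) x = (-1)^i * Real.cos x := by
  induction i with
  | zero => simp [GG_zero]
  | succ k ih => rw [show 2*(k+1) = 2*k+2 by ring, GG_add_two, ih, pow_succ]; ring

lemma GG_odd (i : ℕ) (x : ℝ) : GG (2*i+1) x = (-1)^i * (-Real.sin x) := by
  induction i with
  | zero => simp [GG_one]
  | succ k ih => rw [show 2*(k+1)+1 = 2*k+1+2 by ring, GG_add_two, ih, pow_succ]; ring

noncomputable def sc (n : ℕ) : ℝ := 2 * Real.sqrt n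

lemma sc_sq (n : ℕ) : sc n ^ 2 = 4 * n := by
  unfold sc; rw [mul_pow, Real.sq_sqrt (by positivity)]; ring

lemma sc_pos (n : ℕ) (h : 1 ≤ n) : 0 < sc n := by
  unfold sc
  have : (0:ℝ) < n := by exact_mod_cast h
  positivity

lemma sc_tendsto : Tendsto sc atTop atTop := by
  unfold sc
  exact ((Real.tendsto_sqrt_atTop.comp tendsto_natCast_atTop_atTop).const_mul_atTop two_pos)

noncomputable def dd (N n k : ℕ) : ℝ := DD N k / (sc n ^ k * DD N 0)

lemma dd_rec (N n k : ℕ) (hn : 1 ≤ n) : dd N n (k+2) = -(2 * ((N:ℝ) - k) / (4 * n)) * dd N n k := by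
  unfold dd
  rw [DD_rec, pow_add, sc_sq]
  have : (0:ℝ) < n := by exact_mod_cast hn
  have := sc_pos n hn
  by_cases h0 : DD N 0 = 0
  · simp [h0]
  field_simp

lemma dd_bound (N n r : ℕ) (hn : 1 ≤ n) (hN : N ≤ 2 * n + r) (hE : Even N) (k : ℕ) :
    |dd N n k| ≤ (1 + (r:ℝ))^k := by
  have hr : (1:ℝ) ≤ 1 + r := by simp
  have hn' : (1:ℝ) ≤ n := by exact_mod_cast hn
  obtain ⟨h0, h1⟩ := physH_even N hE
  induction k using Nat.twoStepInduction with
  | zero => simp [dd, h0]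
  | one => simp [dd, h1]; positivity
  | more k ih _ =>
    by_cases hk : N < k
    · unfold dd; rw [DD_eq_zero N (k+2) (by omega)]; simp; positivity
    · rw [dd_rec N n k hn, abs_mul, pow_add]
      have hk' : (k:ℝ) ≤ N := by exact_mod_cast (not_lt.1 hk)
      have hN' : (N:ℝ) ≤ 2*n+r := by exact_mod_cast hN
      have h2 : |(-(2 * ((N:ℝ) - k) / (4 * n)))| ≤ (1+r)^2 := by
        rw [abs_neg, abs_of_nonneg (div_nonneg (by linarith) (by linarith)), div_le_iff₀ (by linarith)]
        have : (0:ℝ) ≤ r := by positivity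
        have : (0:ℝ) ≤ k := by positivity
        nlinarith [mul_nonneg ‹(0:ℝ) ≤ r› (sub_nonneg.2 hn'), mul_nonneg (mul_nonneg ‹(0:ℝ) ≤ r› ‹(0:ℝ) ≤ r›) (sub_nonneg.2 hn')]
      calc _ ≤ (1+(r:ℝ))^2 * (1+(r:ℝ))^k := by gcongr
        _ = _ := by ring

lemma coef_tendsto (N : ℕ → ℕ) (r S : ℕ) (hN : ∀ᶠ n in atTop, N n + S = 2 * n + r) (k : ℕ) :
    Tendsto (fun n : ℕ => 2 * ((N n:ℝ) - k) / (4 * n)) atTop (𝓝 1) := by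
  have h1 : Tendsto (fun n : ℕ => 1 + (((r:ℝ) - S - k)/2) * (1 / (n:ℝ))) atTop (𝓝 (1 + (((r:ℝ) - S - k)/2) * 0)) :=
    tendsto_const_nhds.add (tendsto_one_div_atTop_nhds_zero_nat.const_mul _)
  simp only [mul_zero, add_zero] at h1
  refine h1.congr' ?_
  filter_upwards [hN, eventually_ge_atTop 1] with n hn hn1
  have : (N n : ℝ) + S = 2 * n + r := by exact_mod_cast hn
  have h2 : (N n : ℝ) = 2*n+r-S := by linarith
  rw [h2]
  have : (0:ℝ) < n := by exact_mod_cast hn1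
  field_simp
  ring

lemma dd_tendsto (N : ℕ → ℕ) (r S : ℕ) (hN : ∀ᶠ n in atTop, N n + S = 2 * n + r)
    (hE : ∀ᶠ n in atTop, Even (N n)) (k : ℕ) :
    Tendsto (fun n => dd (N n) n k) atTop (𝓝 (ee k)) := by
  induction k using Nat.twoStepInduction with
  | zero =>
    refine tendsto_const_nhds.congr' ?_
    filter_upwards [hE] with n hn
    simp [dd, ee, (physH_even _ hn).1]
  | one =>
    refine tendsto_const_nhds.congr' ?_
    filter_upwards [hE] with n hn
    simp [dd, ee, (physH_even _ hn).2]
  | more k ih _ =>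
    have := ((coef_tendsto N r S hN k).neg).mul ih
    rw [ee, show -ee k = -1 * ee k by ring]
    refine this.congr' ?_
    filter_upwards [eventually_ge_atTop 1] with n hn
    rw [dd_rec _ _ _ hn]

lemma g_tendsto (N : ℕ → ℕ) (r S : ℕ) (hN : ∀ᶠ n in atTop, N n + S = 2 * n + r)
    (hE : ∀ᶠ n in atTop, Even (N n)) (i : ℕ) (x₀ : ℝ) :
    Tendsto (fun z : ℕ × ℝ => (derivative^[i] (physHermite (N z.1))).eval (z.2 / sc z.1) /
      (sc z.1 ^ i * DD (N z.1) 0)) (atTop ×ˢ 𝓝 x₀) (𝓝 (GG i x₀)) := by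
  have h1 : Tendsto (fun z : ℕ × ℝ => ∑' k : ℕ, dd (N z.1) z.1 (k+i) * (z.2^k / (k.factorial : ℝ)))
      (atTop ×ˢ 𝓝 x₀) (𝓝 (GG i x₀)) := by
    refine tendsto_tsum_of_dominated_convergence
      (bound := fun k => (1+(r:ℝ))^i * (((1+(r:ℝ)) * (|x₀|+1))^k / (k.factorial:ℝ))) ?_ ?_ ?_
    · exact (Real.summable_pow_div_factorial _).mul_left _
    · intro k
      exact ((dd_tendsto N r S hN hE (k+i)).comp tendsto_fst).mul
        ((tendsto_snd.pow k).div_const _)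
    · have e1 : ∀ᶠ z : ℕ × ℝ in atTop ×ˢ 𝓝 x₀, |z.2| ≤ |x₀| + 1 := by
        have : Tendsto (fun z : ℕ × ℝ => |z.2|) (atTop ×ˢ 𝓝 x₀) (𝓝 |x₀|) := tendsto_snd.abs
        exact this.eventually (eventually_le_nhds (by linarith))
      filter_upwards [e1, tendsto_fst.eventually hN, tendsto_fst.eventually hE,
        tendsto_fst.eventually (eventually_ge_atTop 1)] with z h1 h2 h3 h4 k
      rw [Real.norm_eq_abs, abs_mul, abs_div, abs_pow, Nat.abs_cast]
      calc _ ≤ (1+(r:ℝ))^(k+i) * ((|x₀|+1)^k / (k.factorial:ℝ)) := by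
            have := dd_bound (N z.1) z.1 r h4 (by omega) h3 (k+i)
            gcongr
        _ = _ := by rw [mul_pow, pow_add]; ring
  refine h1.congr' ?_
  filter_upwards [tendsto_fst.eventually (eventually_ge_atTop 1)] with z hz
  have h2 := (hasSum_taylor (derivative^[i] (physHermite (N z.1))) (z.2 / sc z.1)).div_const
    (sc z.1 ^ i * DD (N z.1) 0)
  rw [← h2.tsum_eq]
  congr 1; funext k
  rw [← Function.iterate_add_apply]
  have hs := (sc_pos _ hz).ne'
  change _ = DD (N z.1) (k+i) / _ * _ / _
  unfold dd
  rw [pow_add, div_pow]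
  by_cases h0 : DD (N z.1) 0 = 0
  · simp [h0]
  have : (k.factorial : ℝ) ≠ 0 := by positivity
  field_simp

lemma term_tendsto (N : ℕ → ℕ) (r S : ℕ) (hN : ∀ᶠ n in atTop, N n + S = 2 * n + r)
    (hE : ∀ᶠ n in atTop, Even (N n)) (c : ℝ[X]) (i q : ℕ) (hq : i ≤ q) (x₀ : ℝ) :
    Tendsto (fun z : ℕ × ℝ => (c * derivative^[i] (physHermite (N z.1))).eval (z.2 / sc z.1) /
      (sc z.1 ^ q * DD (N z.1) 0)) (atTop ×ˢ 𝓝 x₀)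
      (𝓝 (if i = q then c.eval 0 * GG q x₀ else 0)) := by
  have hx : Tendsto (fun z : ℕ × ℝ => z.2 / sc z.1) (atTop ×ˢ 𝓝 x₀) (𝓝 0) :=
    (tendsto_snd (f := atTop) (g := 𝓝 x₀)).div_atTop (sc_tendsto.comp tendsto_fst)
  have h1 : Tendsto (fun z : ℕ × ℝ => c.eval (z.2 / sc z.1)) (atTop ×ˢ 𝓝 x₀) (𝓝 (c.eval 0)) :=
    (c.continuous.tendsto 0).comp hx
  have h2 : Tendsto (fun z : ℕ × ℝ => (1 / sc z.1)^(q-i)) (atTop ×ˢ 𝓝 x₀)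
      (𝓝 (0^(q-i))) := by
    refine Tendsto.pow ?_ _
    exact tendsto_const_nhds.div_atTop (sc_tendsto.comp tendsto_fst)
  have h3 := (h1.mul h2).mul (g_tendsto N r S hN hE i x₀)
  have e : (if i = q then c.eval 0 * GG q x₀ else 0) = c.eval 0 * 0^(q-i) * GG i x₀ := by
    split_ifs with h
    · subst h; simp
    · rw [zero_pow (by omega)]; ring
  rw [e]
  refine h3.congr' ?_
  filter_upwards [tendsto_fst.eventually (eventually_ge_atTop 1)] with z hz
  have hs := (sc_pos _ hz).ne'
  rw [eval_mul]
  obtain ⟨j, rfl⟩ := Nat.exists_eq_add_of_le hq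
  rw [Nat.add_sub_cancel_left, pow_add, div_pow, one_pow]
  by_cases h0 : DD (N z.1) 0 = 0
  · simp [h0]
  field_simp

noncomputable def FF (r : ℕ) (lam : Fin r → ℕ) (n : ℕ) (x : ℝ) : ℝ :=
  (XHermite r lam (2*n)).eval (x / sc n) / (sc n ^ r * DD (2*n+r-∑ i, lam i) 0)

noncomputable def FF' (r : ℕ) (lam : Fin r → ℕ) (n : ℕ) (x : ℝ) : ℝ :=
  (derivative (XHermite r lam (2*n))).eval (x / sc n) / (sc n ^ (r+1) * DD (2*n+r-∑ i, lam i) 0)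

lemma FF_deriv (r : ℕ) (lam : Fin r → ℕ) (n : ℕ) (x : ℝ) :
    HasDerivAt (FF r lam n) (FF' r lam n x) x := by
  have h1 : HasDerivAt (fun x : ℝ => x / sc n) (1 / sc n) x := (hasDerivAt_id x).div_const _
  have h2 := ((XHermite r lam (2*n)).hasDerivAt (x / sc n)).comp x h1
  have h3 := h2.div_const (sc n ^ r * DD (2*n+r-∑ i, lam i) 0)
  have e : FF' r lam n x = (derivative (XHermite r lam (2*n))).eval (x / sc n) * (1 / sc n) /
      (sc n ^ r * DD (2*n+r-∑ i, lam i) 0) := by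
    unfold FF'
    rw [pow_succ, mul_one_div, div_div]; congr 1; ring
  rw [e]
  exact h3

lemma FF_tendsto (r : ℕ) (lam : Fin r → ℕ) (hp : IsEvenPartition r lam) :
    ∃ c : ℝ, c ≠ 0 ∧ (∀ x₀, Tendsto (fun z : ℕ × ℝ => FF r lam z.1 z.2) (atTop ×ˢ 𝓝 x₀)
      (𝓝 (c * Real.cos x₀))) ∧ (∀ x₀, Tendsto (fun z : ℕ × ℝ => FF' r lam z.1 z.2) (atTop ×ˢ 𝓝 x₀)
      (𝓝 (c * -Real.sin x₀))) := by
  obtain ⟨c, hc, hX⟩ := XH_expand r lam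
  obtain ⟨h, hr⟩ := hp.2.1
  have hS := sum_even r lam hp
  set S := ∑ i, lam i with hSdef
  set N : ℕ → ℕ := fun n => 2*n+r-S with hNdef
  have hN : ∀ᶠ n in atTop, N n + S = 2 * n + r := by
    filter_upwards [eventually_ge_atTop S] with n hn
    simp only [hNdef]; omega
  have hE : ∀ᶠ n in atTop, Even (N n) := by
    filter_upwards with n
    simp only [hNdef]
    rw [Nat.even_iff] at *
    omega
  refine ⟨(genHermite r lam).eval 0 * (-1)^h, mul_ne_zero (genHermite_ne r lam hp) (by simp), ?_, ?_⟩
  · intro x₀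
    have h1 := tendsto_finsetSum (Finset.univ : Finset (Fin (r+1)))
      (fun i _ => term_tendsto N r S hN hE (c i) i r (by omega) x₀)
    have e1 : ∑ i : Fin (r+1), (if (i:ℕ) = r then (c i).eval 0 * GG r x₀ else 0) =
        (genHermite r lam).eval 0 * (-1)^h * Real.cos x₀ := by
      rw [Finset.sum_eq_single (Fin.last r)]
      · rw [Fin.val_last, if_pos rfl, hc, mul_assoc, ← GG_even, show 2 * h = r by omega]
      · intro i _ hi
        rw [if_neg]
        intro h; apply hi; ext; simpa using h
      · simp
    rw [e1] at h1
    refine h1.congr ?_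
    intro z
    unfold FF
    rw [hX, eval_finsetSum, Finset.sum_div]
  · intro x₀
    have h1 := tendsto_finsetSum (Finset.univ : Finset (Fin (r+1)))
      (fun i _ => (term_tendsto N r S hN hE (derivative (c i)) i (r+1) (by omega) x₀).add
        (term_tendsto N r S hN hE (c i) (i+1) (r+1) (by omega) x₀))
    have e1 : ∑ i : Fin (r+1), ((if (i:ℕ) = r+1 then (derivative (c i)).eval 0 * GG (r+1) x₀ else 0) +
        (if (i:ℕ)+1 = r+1 then (c i).eval 0 * GG (r+1) x₀ else 0)) =
        (genHermite r lam).eval 0 * (-1)^h * -Real.sin x₀ := by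
      rw [Finset.sum_eq_single (Fin.last r)]
      · rw [Fin.val_last, if_pos rfl, if_neg (by omega), hc, mul_assoc, ← GG_odd, show 2 * h = r by omega]
        ring
      · intro i _ hi
        have : (i:ℕ) ≠ r := by
          intro h; apply hi; ext; simpa using h
        rw [if_neg (by omega), if_neg (by omega)]; ring
      · simp
    rw [e1] at h1
    refine h1.congr ?_
    intro z
    unfold FF'
    rw [hX, derivative_sum, eval_finsetSum, Finset.sum_div]
    apply Finset.sum_congr rfl
    intro i _
    rw [derivative_mul, eval_add, add_div, ← Function.iterate_succ_apply' (f := derivative)]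

/-! ### Convergence of successive zeros -/

lemma next_zero (F F' : ℕ → ℝ → ℝ) (hd : ∀ n x, HasDerivAt (F n) (F' n x) x) (c : ℝ) (hc : c ≠ 0)
    (hF : ∀ x₀, Tendsto (fun z : ℕ × ℝ => F z.1 z.2) (atTop ×ˢ 𝓝 x₀) (𝓝 (c * Real.cos x₀)))
    (hF' : ∀ x₀, Tendsto (fun z : ℕ × ℝ => F' z.1 z.2) (atTop ×ˢ 𝓝 x₀) (𝓝 (c * -Real.sin x₀)))
    (p y : ℕ → ℝ) (a b : ℝ) (hab : a < b) (hb : Real.cos b = 0)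
    (hno : ∀ z, a < z → z < b → Real.cos z ≠ 0) (hp : Tendsto p atTop (𝓝 a))
    (hpy : ∀ᶠ n in atTop, p n < y n) (hy0 : ∀ᶠ n in atTop, F n (y n) = 0)
    (hnext : ∀ᶠ n in atTop, ∀ z, p n < z → F n z = 0 → y n ≤ z)
    (ha : Real.cos a ≠ 0 ∨ ∀ᶠ n in atTop, F n (p n) = 0) :
    Tendsto y atTop (𝓝 b) := by
  have hpt : ∀ x₀, Tendsto (fun n => F n x₀) atTop (𝓝 (c * Real.cos x₀)) := by
    intro x₀
    exact (hF x₀).comp (tendsto_id.prodMk (tendsto_const_nhds))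
  have sin_sq : ∀ z, Real.cos z = 0 → Real.sin z ^ 2 = 1 := by
    intro z hz
    have := Real.sin_sq_add_cos_sq z
    rw [hz] at this; linarith
  have step1 : ∀ ε > 0, ∀ᶠ n in atTop, y n ≤ b + ε := by
    intro ε hε
    set δ := min ε (min ((b-a)/2) 1) with hδ
    have hδ0 : 0 < δ := by
      simp only [hδ, lt_min_iff]; exact ⟨hε, by linarith, one_pos⟩
    have hδ1 : δ ≤ ε := min_le_left _ _
    have hδ2 : δ ≤ (b-a)/2 := (min_le_right _ _).trans (min_le_left _ _)
    have hδ3 : δ ≤ 1 := (min_le_right _ _).trans (min_le_right _ _)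
    have hprod := (hpt (b-δ)).mul (hpt (b+δ))
    have hneg : c * Real.cos (b-δ) * (c * Real.cos (b+δ)) < 0 := by
      rw [Real.cos_sub, Real.cos_add, hb]
      have h1 : 0 < Real.sin δ := Real.sin_pos_of_pos_of_lt_pi hδ0 (by linarith [Real.pi_gt_three])
      have h2 := sin_sq b hb
      have h3 : c * (0 * Real.cos δ + Real.sin b * Real.sin δ) * (c * (0 * Real.cos δ - Real.sin b * Real.sin δ))
        = - (c^2 * Real.sin δ ^2 * Real.sin b ^ 2) := by ring
      rw [h3, h2]
      have : 0 < c^2 := by positivity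
      have := mul_pos this (pow_pos h1 2)
      linarith
    filter_upwards [hprod.eventually (eventually_lt_nhds hneg), hnext,
      hp.eventually (eventually_lt_nhds (show a < b - δ by linarith))] with n h1 h2 h3
    have hcont : ContinuousOn (F n) (Set.uIcc (b-δ) (b+δ)) :=
      fun x _ => (hd n x).continuousAt.continuousWithinAt
    have h0 : (0:ℝ) ∈ Set.uIcc (F n (b-δ)) (F n (b+δ)) := by
      rw [Set.mem_uIcc]
      rcases mul_neg_iff.1 h1 with h | h
      · exact Or.inr ⟨h.2.le, h.1.le⟩
      · exact Or.inl ⟨h.1.le, h.2.le⟩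
    obtain ⟨z, hz, hz0⟩ := intermediate_value_uIcc hcont h0
    rw [Set.uIcc_of_le (by linarith)] at hz
    have := h2 z (by linarith [hz.1]) hz0
    linarith [hz.2]
  refine (isCompact_Icc (a := a - 1) (b := b + 1)).tendsto_nhds_of_unique_mapClusterPt ?_ ?_
  · filter_upwards [step1 1 one_pos, hpy, hp.eventually (eventually_gt_nhds (show a - 1 < a by linarith))]
      with n h1 h2 h3
    exact ⟨by linarith, h1⟩
  intro z _ hz
  have hcos : Real.cos z = 0 := by
    by_contra hne
    have h1 := (hF z).eventually (eventually_ne_nhds (mul_ne_zero hc hne))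
    obtain ⟨U, hU, V, hV, hUV⟩ := eventually_prod_iff.1 h1
    obtain ⟨n, h2, h3, h4⟩ := ((hz.frequently hV).and_eventually (hU.and hy0)).exists
    exact hUV h3 h2 h4
  have haz : a ≤ z := by
    by_contra hlt
    push Not at hlt
    obtain ⟨n, h2, h3, h4⟩ := ((hz.frequently (eventually_lt_nhds (show z < (z+a)/2 by linarith))).and_eventually
      (hpy.and (hp.eventually (eventually_gt_nhds (show (z+a)/2 < a by linarith))))).exists
    linarith
  have hzb : z ≤ b := by
    by_contra hlt
    push Not at hlt
    obtain ⟨n, h2, h3⟩ := ((hz.frequently (eventually_gt_nhds (show (z+b)/2 < z by linarith))).and_eventually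
      (step1 ((z-b)/2) (by linarith))).exists
    linarith
  have hza : z ≠ a := by
    rintro rfl
    have hp0 := ha.resolve_left (by simpa using hcos)
    have hs : Real.sin z ≠ 0 := by
      intro h; have := sin_sq z hcos; rw [h] at this; norm_num at this
    have h1 := (hF' z).eventually (eventually_ne_nhds (mul_ne_zero hc (neg_ne_zero.2 hs)))
    obtain ⟨U, hU, V, hV, hUV⟩ := eventually_prod_iff.1 h1
    obtain ⟨δ, hδ, hball⟩ := Metric.eventually_nhds_iff_ball.1 hV
    have hb' : Metric.ball z δ ∈ 𝓝 z := Metric.ball_mem_nhds z hδ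
    obtain ⟨n, h2, h3, h4, h5, h6, h7⟩ := ((hz.frequently hb').and_eventually
      (hU.and (hpy.and (hy0.and (hp0.and (hp.eventually hb')))))).exists
    obtain ⟨ξ, hξ, hξ0⟩ := exists_hasDerivAt_eq_zero (f := F n) (f' := F' n) h4
      (fun x _ => (hd n x).continuousAt.continuousWithinAt) (by rw [h5, h6]) (fun x _ => hd n x)
    refine hUV h3 (hball ξ ?_) hξ0
    have h2' : y n ∈ Metric.ball z δ := h2
    have h7' : p n ∈ Metric.ball z δ := h7
    rw [Real.ball_eq_Ioo] at *
    exact ⟨h7'.1.trans hξ.1, hξ.2.trans h2'.2⟩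
  by_contra hne
  exact hno z (lt_of_le_of_ne haz (Ne.symm hza)) (lt_of_le_of_ne hzb hne) hcos

/-- symmetry of the enumeration -/
lemma enum_symm (M : ℕ) (y : ℕ → ℝ) (Z : ℝ → Prop) (hm : StrictMonoOn y (Set.Icc 1 M))
    (hZ : ∀ t, Z t ↔ ∃ j : ℕ, 1 ≤ j ∧ j ≤ M ∧ y j = t) (hneg : ∀ t, Z t → Z (-t)) :
    ∀ j, 1 ≤ j → j ≤ M → y (M + 1 - j) = - y j := by
  have h1 : StrictMono (fun i : Fin M => y (i+1)) := by
    intro i j hij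
    have : (i:ℕ) < j := hij
    exact hm ⟨by omega, by omega⟩ ⟨by omega, by omega⟩ (by omega)
  have h2 : StrictMono (fun i : Fin M => - y (M - i)) := by
    intro i j hij
    have : (i:ℕ) < j := hij
    exact neg_lt_neg (hm ⟨by omega, by omega⟩ ⟨by omega, by omega⟩ (by omega))
  have h3 : (fun i : Fin M => y (i+1)) = (fun i : Fin M => - y (M - i)) := by
    rw [← StrictMono.range_inj h1 h2]
    ext t
    constructor
    · rintro ⟨i, rfl⟩
      obtain ⟨j, hj1, hj2, hj⟩ := (hZ _).1 (hneg _ ((hZ (y (i+1))).2 ⟨i+1, by omega, by omega, rfl⟩))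
      refine ⟨⟨M - j, by omega⟩, ?_⟩
      simp only
      rw [show M - (M - j) = j by omega, hj, neg_neg]
    · rintro ⟨i, rfl⟩
      obtain ⟨j, hj1, hj2, hj⟩ := (hZ _).1 (hneg _ ((hZ (y (M-i))).2 ⟨M-i, by omega, by omega, rfl⟩))
      refine ⟨⟨j - 1, by omega⟩, ?_⟩
      simp only
      rw [show j - 1 + 1 = j by omega, hj]
  intro j hj1 hj2
  have := congrFun h3 ⟨M - j, by omega⟩
  simp only at this
  rw [show M - j + 1 = M + 1 - j by omega, show M - (M - j) = j by omega] at this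
  exact this

lemma cos_ne_between (k : ℤ) (z : ℝ) (h1 : Real.pi / 2 + k * Real.pi < z)
    (h2 : z < Real.pi / 2 + (k+1) * Real.pi) : Real.cos z ≠ 0 := by
  intro h
  obtain ⟨m, rfl⟩ := Real.cos_eq_zero_iff.1 h
  have hpi := Real.pi_pos
  have h3 : (k:ℝ) < m := by
    by_contra hh; push Not at hh
    nlinarith
  have h4 : (m:ℝ) < k + 1 := by
    by_contra hh; push Not at hh
    nlinarith
  have h3' : k < m := by exact_mod_cast h3
  have h4' : m < k + 1 := by exact_mod_cast h4
  omega

lemma main_pos (r : ℕ) (lam : Fin r → ℕ) (hpart : IsEvenPartition r lam) (x : ℕ → ℕ → ℝ) (L : ℕ)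
    (hL : ∑ i, lam i = 2 * L)
    (hmono : ∀ n, 2 * L ≤ n → StrictMonoOn (x (2*n)) (Set.Icc 1 (2*n - 2*L)))
    (hz : ∀ n, 2 * L ≤ n → ∀ t : ℝ, (XHermite r lam (2*n)).eval t = 0 ↔
        ∃ j : ℕ, 1 ≤ j ∧ j ≤ 2*n - 2*L ∧ x (2*n) j = t)
    (hsymm : ∀ n, 2 * L ≤ n → ∀ j, 1 ≤ j → j ≤ 2*n-2*L →
      x (2*n) (2*n-2*L + 1 - j) = - x (2*n) j) (k : ℕ) :
    Tendsto (fun n : ℕ => sc n * x (2*n) (n - L + 1 + k)) atTop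
      (𝓝 (Real.pi / 2 + k * Real.pi)) := by
  obtain ⟨c, hc, hF, hF'⟩ := FF_tendsto r lam hpart
  have hzero : ∀ n, 2*L ≤ n → 1 ≤ n → ∀ t, FF r lam n t = 0 ↔
      ∃ j : ℕ, 1 ≤ j ∧ j ≤ 2*n - 2*L ∧ sc n * x (2*n) j = t := by
    intro n hn hn1 t
    have hs := sc_pos n hn1
    have hE : Even (2*n+r-∑ i, lam i) := by
      obtain ⟨h, hr⟩ := hpart.2.1
      rw [hL, Nat.even_iff]; omega
    have h0 := (physH_even _ hE).1
    unfold FF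
    rw [div_eq_zero_iff, or_iff_left (mul_ne_zero (pow_ne_zero _ hs.ne') h0), hz n hn]
    constructor
    · rintro ⟨j, h1, h2, h3⟩
      exact ⟨j, h1, h2, by rw [h3]; field_simp⟩
    · rintro ⟨j, h1, h2, h3⟩
      exact ⟨j, h1, h2, by rw [← h3]; field_simp⟩
  induction k with
  | zero =>
    have hneg : ∀ n, 2*L+2 ≤ n → x (2*n) (n-L) < 0 := by
      intro n hn
      have h1 := hsymm n (by omega) (n-L) (by omega) (by omega)
      have h2 := hmono n (by omega) (show n - L ∈ _ from ⟨by omega, by omega⟩)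
        (show 2*n-2*L+1-(n-L) ∈ _ from ⟨by omega, by omega⟩) (by omega)
      linarith
    refine next_zero (FF r lam) (FF' r lam) (FF_deriv r lam) c hc hF hF' (fun _ => 0) _ 0 _
      (by simp [Real.pi_pos]) (by simp) ?_ tendsto_const_nhds ?_ ?_ ?_ (Or.inl (by simp))
    · intro z h1 h2
      refine cos_ne_between (-1) z ?_ ?_
      · push_cast; linarith [Real.pi_pos]
      · push_cast; simpa using h2
    · filter_upwards [eventually_ge_atTop (2*L+2)] with n hn
      have h1 := hsymm n (by omega) (n-L) (by omega) (by omega)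
      rw [show 2*n-2*L+1-(n-L) = n-L+1+0 by omega] at h1
      rw [h1]
      exact mul_pos (sc_pos n (by omega)) (by linarith [hneg n hn])
    · filter_upwards [eventually_ge_atTop (2*L+2)] with n hn
      rw [hzero n (by omega) (by omega)]
      exact ⟨_, by omega, by omega, rfl⟩
    · filter_upwards [eventually_ge_atTop (2*L+2)] with n hn z hz0 hzz
      obtain ⟨j, h1, h2, rfl⟩ := (hzero n (by omega) (by omega) z).1 hzz
      have hs := sc_pos n (by omega)
      have hj : 0 < x (2*n) j := by
        by_contra hh; push Not at hh
        nlinarith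
      have hjL : n - L + 1 + 0 ≤ j := by
        by_contra hh
        have := (hmono n (by omega)).monotoneOn (show j ∈ _ from ⟨by omega, by omega⟩)
          (show n - L ∈ _ from ⟨by omega, by omega⟩) (by omega)
        linarith [hneg n hn]
      exact mul_le_mul_of_nonneg_left ((hmono n (by omega)).monotoneOn ⟨by omega, by omega⟩
        ⟨by omega, by omega⟩ hjL) hs.le
  | succ k ih =>
    refine next_zero (FF r lam) (FF' r lam) (FF_deriv r lam) c hc hF hF' _ _ _ _
      ?_ ?_ ?_ ih ?_ ?_ ?_ (Or.inr ?_)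
    · push_cast; nlinarith [Real.pi_pos]
    · rw [Real.cos_eq_zero_iff]
      exact ⟨k+1, by push_cast; ring⟩
    · intro z h1 h2
      refine cos_ne_between k z ?_ ?_
      · exact_mod_cast h1
      · push_cast at h2 ⊢; exact h2
    · filter_upwards [eventually_ge_atTop (2*L+k+2)] with n hn
      exact mul_lt_mul_of_pos_left (hmono n (by omega) ⟨by omega, by omega⟩ ⟨by omega, by omega⟩
        (by omega)) (sc_pos n (by omega))
    · filter_upwards [eventually_ge_atTop (2*L+k+2)] with n hn
      rw [hzero n (by omega) (by omega)]
      exact ⟨_, by omega, by omega, rfl⟩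
    · filter_upwards [eventually_ge_atTop (2*L+k+2)] with n hn z hz0 hzz
      obtain ⟨j, h1, h2, rfl⟩ := (hzero n (by omega) (by omega) z).1 hzz
      have hs := sc_pos n (by omega)
      have hj := lt_of_mul_lt_mul_left hz0 hs.le
      rw [(hmono n (by omega)).lt_iff_lt ⟨by omega, by omega⟩ ⟨by omega, by omega⟩] at hj
      exact mul_le_mul_of_nonneg_left ((hmono n (by omega)).monotoneOn ⟨by omega, by omega⟩
        ⟨by omega, by omega⟩ (by omega)) hs.le
    · filter_upwards [eventually_ge_atTop (2*L+k+2)] with n hn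
      rw [hzero n (by omega) (by omega)]
      exact ⟨_, by omega, by omega, rfl⟩

/-- Theorem 1.1(even), eq. (10): for an even partition `λ` and fixed `k ∈ ℤ`,
`lim_{n→∞} 2√n · x_{k+n+1-|λ|/2, 2n} = π/2 + kπ`, where `x_{1,m} < ⋯ < x_{m-|λ|,m}`
enumerate the real zeros of `P_m` (for `m ≥ |λ| + λ_1`). -/
theorem zero_spacing_even
    (r : ℕ) (lam : Fin r → ℕ) (hpart : IsEvenPartition r lam)
    (x : ℕ → ℕ → ℝ)
    (hx : ∀ m : ℕ, (∀ i : Fin r, (∑ i, lam i) + lam i ≤ m) →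
      StrictMonoOn (x m) (Set.Icc 1 (m - ∑ i, lam i)) ∧
      ∀ t : ℝ, (XHermite r lam m).eval t = 0 ↔
        ∃ j : ℕ, 1 ≤ j ∧ j ≤ m - (∑ i, lam i) ∧ x m j = t)
    (k : ℤ) :
    Filter.Tendsto
      (fun n : ℕ => 2 * Real.sqrt n *
        x (2 * n) (k + (n : ℤ) + 1 - ((∑ i, lam i : ℕ) : ℤ) / 2).toNat)
      Filter.atTop (nhds (Real.pi / 2 + (k : ℝ) * Real.pi)) := by
  obtain ⟨L, hL'⟩ := sum_even r lam hpart
  have hL : ∑ i, lam i = 2 * L := by omega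
  have hx' : ∀ n, 2 * L ≤ n → StrictMonoOn (x (2*n)) (Set.Icc 1 (2*n - 2*L)) ∧
      ∀ t : ℝ, (XHermite r lam (2*n)).eval t = 0 ↔
        ∃ j : ℕ, 1 ≤ j ∧ j ≤ 2*n - 2*L ∧ x (2*n) j = t := by
    intro n hn
    have h := hx (2*n) (by
      intro i
      have : lam i ≤ ∑ i, lam i := Finset.single_le_sum (fun _ _ => Nat.zero_le _) (Finset.mem_univ i)
      omega)
    rw [hL] at h
    exact h
  have hsymm : ∀ n, 2 * L ≤ n → ∀ j, 1 ≤ j → j ≤ 2*n-2*L →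
      x (2*n) (2*n-2*L + 1 - j) = - x (2*n) j := by
    intro n hn
    exact enum_symm _ _ (fun t => (XHermite r lam (2*n)).eval t = 0) (hx' n hn).1 (hx' n hn).2
      (fun t => XH_neg r lam (2*n) t)
  have hmain := main_pos r lam hpart x L hL (fun n hn => (hx' n hn).1) (fun n hn => (hx' n hn).2) hsymm
  have hdiv : ((∑ i, lam i : ℕ) : ℤ) / 2 = L := by rw [hL]; omega
  rw [hdiv]
  obtain ⟨m, rfl | rfl⟩ : ∃ m : ℕ, k = m ∨ k = -(m:ℤ) - 1 := by
    rcases lt_or_ge k 0 with h | h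
    · exact ⟨(-k-1).toNat, Or.inr (by omega)⟩
    · exact ⟨k.toNat, Or.inl (by omega)⟩
  · refine Tendsto.congr' ?_ (by simpa using hmain m)
    filter_upwards [eventually_ge_atTop (2*L)] with n hn
    rw [show ((m:ℤ) + (n : ℤ) + 1 - (L:ℤ)).toNat = n - L + 1 + m by omega, sc]
  · have h1 := (hmain m).neg
    have e : Real.pi / 2 + ((-(m:ℤ) - 1 : ℤ) : ℝ) * Real.pi = -(Real.pi / 2 + m * Real.pi) := by
      push_cast; ring
    rw [e]
    refine h1.congr' ?_
    filter_upwards [eventually_ge_atTop (2*L+m+2)] with n hn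
    have h2 := hsymm n (by omega) (n - L + 1 + m) (by omega) (by omega)
    rw [show (-(m:ℤ) - 1 + (n : ℤ) + 1 - (L:ℤ)).toNat = 2*n-2*L+1-(n-L+1+m) by omega, h2, sc]
    ring
end

section
/- Let λ be a partition of length r and let n ∈ N_λ. Then the meromorphic function x ↦ P_n(x)² e^{−x²} / H_λ(x)² on ℂ has vanishing residue at every zero of H_λ. Concretely: for every zero z₀ of H_λ and for every sufficiently small ε > 0 (so small that z₀ is the only zero of H_λ in the closed disk of radius ε around z₀), the contour integral of P_n(x)² e^{−x²} / H_λ(x)² over the circle |x − z₀| = ε equals 0. -/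
open Polynomial

namespace ResVan

/-- Derivative of a determinant, row by row. -/
lemma hasDerivAt_det {N : ℕ} (A A' : ℂ → Matrix (Fin N) (Fin N) ℂ) (z : ℂ)
    (h : ∀ i j, HasDerivAt (fun w => A w i j) (A' z i j) z) :
    HasDerivAt (fun w => (A w).det) (∑ i, ((A z).updateRow i (A' z i)).det) z := by
  let f : ContinuousMultilinearMap ℂ (fun _ : Fin N => Fin N → ℂ) ℂ :=
    ⟨(Matrix.detRowAlternating (R := ℂ) (n := Fin N)).toMultilinearMap,
      Continuous.matrix_det (A := fun M : Matrix (Fin N) (Fin N) ℂ => M) continuous_id⟩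
  have hA : HasDerivAt (fun w => (fun i j => A w i j : Fin N → Fin N → ℂ))
      (fun i j => A' z i j) z :=
    hasDerivAt_pi.2 fun i => hasDerivAt_pi.2 fun j => h i j
  have := (f.hasFDerivAt (x := fun i j => A z i j)).comp_hasDerivAt z hA
  rw [ContinuousMultilinearMap.linearDeriv_apply] at this
  exact this

/-- Derivative of a Wronskian-type determinant of jets. -/
lemma hasDerivAt_wron {N : ℕ} (F : Fin (N + 1) → ℕ → ℂ → ℂ) (z : ℂ)
    (h : ∀ j k, HasDerivAt (F j k) (F j (k + 1) z) z) :
    HasDerivAt (fun w => (Matrix.of fun i j : Fin (N + 1) => F j i w).det)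
      ((Matrix.of fun i j : Fin (N + 1) => F j i z).updateRow (Fin.last N)
        (fun j => F j (N + 1) z)).det z := by
  have := hasDerivAt_det (fun w => (Matrix.of fun i j : Fin (N + 1) => F j i w))
    (fun w => (Matrix.of fun i j : Fin (N + 1) => F j (i + 1) w)) z (fun i j => h j i)
  convert! this using 1
  rw [Fin.sum_univ_castSucc, Finset.sum_eq_zero, zero_add]
  · rfl
  · intro i _
    apply Matrix.det_zero_of_row_eq (i := i.castSucc) (j := i.succ)
    · exact Fin.castSucc_lt_succ.ne
    · rw [Matrix.updateRow_self, Matrix.updateRow_ne Fin.castSucc_lt_succ.ne']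
      ext j
      simp

/-- residual of the row `k`. -/
noncomputable def res {r : ℕ} (a : Fin r → ℂ) (k : ℕ) (y : ℕ → ℂ) : ℂ :=
  y k - ∑ i, a i * y i

/-- Schur complement for jets. -/
lemma det_block {r s : ℕ} (f : Fin r → ℕ → ℂ) (y : Fin s → ℕ → ℂ) (k : Fin s → ℕ)
    (A : ℕ → Fin r → ℂ) (hA : ∀ k j, f j k = ∑ i, A k i * f j i)
    (B : Matrix (Fin (r + s)) (Fin (r + s)) ℂ)
    (h11 : ∀ i j : Fin r, B (Fin.castAdd s i) (Fin.castAdd s j) = f j i)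
    (h12 : ∀ (i : Fin r) j, B (Fin.castAdd s i) (Fin.natAdd r j) = y j i)
    (h21 : ∀ i (j : Fin r), B (Fin.natAdd r i) (Fin.castAdd s j) = f j (k i))
    (h22 : ∀ i j, B (Fin.natAdd r i) (Fin.natAdd r j) = y j (k i)) :
    B.det = (Matrix.of fun i j : Fin r => f j i).det *
      (Matrix.of fun i j : Fin s => res (A (k i)) (k i) (y j)).det := by
  let M : Matrix (Fin r) (Fin r) ℂ := Matrix.of fun i j : Fin r => f j i
  let Nn : Matrix (Fin r) (Fin s) ℂ := Matrix.of fun i j => y j i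
  let L : Matrix (Fin s) (Fin r) ℂ := Matrix.of fun i j => A (k i) j
  let S : Matrix (Fin s) (Fin s) ℂ := Matrix.of fun i j : Fin s => res (A (k i)) (k i) (y j)
  have hB : B.submatrix finSumFinEquiv finSumFinEquiv =
      Matrix.fromBlocks 1 0 L 1 * Matrix.fromBlocks M Nn 0 S := by
    rw [Matrix.fromBlocks_multiply]
    ext i j
    rcases i with i | i <;> rcases j with j | j
    · simp [h11, M]
    · simp [h12, Nn]
    · simp [h21, M, L, Matrix.mul_apply, hA (k i) j]
    · simp [h22, Nn, L, S, Matrix.mul_apply, res]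
  rw [← Matrix.det_submatrix_equiv_self finSumFinEquiv B, hB, Matrix.det_mul,
    Matrix.det_fromBlocks_zero₁₂, Matrix.det_fromBlocks_zero₂₁]
  simp [M, S]

/-- existence of the reduction coefficients. -/
lemma exists_coeff {r : ℕ} (f : Fin r → ℕ → ℂ)
    (hH : (Matrix.of fun i j : Fin r => f j i).det ≠ 0) :
    ∃ A : ℕ → Fin r → ℂ, (∀ k j, f j k = ∑ i, A k i * f j i) ∧
      ∀ (k : Fin r) (y : ℕ → ℂ), res (A k) k y = 0 := by
  set M : Matrix (Fin r) (Fin r) ℂ := Matrix.of fun i j : Fin r => f j i with hM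
  have hu : IsUnit M.det := isUnit_iff_ne_zero.2 hH
  refine ⟨fun k => Matrix.vecMul (fun j => f j k) M⁻¹, fun k j => ?_, fun k y => ?_⟩
  · have : Matrix.vecMul (Matrix.vecMul (fun j => f j k) M⁻¹) M = fun j => f j k := by
      rw [Matrix.vecMul_vecMul, Matrix.nonsing_inv_mul _ hu, Matrix.vecMul_one]
    exact (congrFun this j).symm
  · have : Matrix.vecMul (fun j => f j k) M⁻¹ = Pi.single k 1 := by
      have h1 : (fun j => f j k) = Matrix.vecMul (Pi.single k 1) M := by
        rw [Matrix.single_one_vecMul]; rfl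
      rw [h1, Matrix.vecMul_vecMul, Matrix.mul_nonsing_inv _ hu, Matrix.vecMul_one]
    simp [res, this, Pi.single_apply]

/-- linear combinations of rows. -/
noncomputable def lc {r : ℕ} (a : Fin r → ℂ) (y : ℕ → ℂ) : ℂ := ∑ i, a i * y i

lemma key_lc {r : ℕ} (A : ℕ → Fin r → ℂ) (x : ℂ) (y : ℕ → ℂ) :
    lc (fun i => A (r + 2) i - 2 * x * A (r + 1) i - 2 * r * A r i
      - ∑ l : Fin r, A r l * (A (l + 2) i - 2 * x * A (l + 1) i - 2 * l * A l i)) y =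
    lc (A (r + 2)) y - 2 * x * lc (A (r + 1)) y - 2 * r * lc (A r) y
      - ∑ l : Fin r, A r l * (lc (A (l + 2)) y - 2 * x * lc (A (l + 1)) y
        - 2 * l * lc (A l) y) := by
  have h : ∀ l : Fin r, A r l * (lc (A (l + 2)) y - 2 * x * lc (A (l + 1)) y
        - 2 * l * lc (A l) y) = ∑ i : Fin r, (A r l * (A (l + 2) i - 2 * x * A (l + 1) i
          - 2 * l * A l i)) * y i := by
    intro l
    simp only [lc, Finset.mul_sum, ← Finset.sum_sub_distrib]
    refine Finset.sum_congr rfl fun i _ => ?_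
    ring
  simp only [h]
  rw [Finset.sum_comm]
  simp only [lc, Finset.mul_sum, ← Finset.sum_sub_distrib, ← Finset.sum_mul]
  refine Finset.sum_congr rfl fun i _ => ?_
  ring

/-- The key identity on residuals. -/
lemma key {r : ℕ} (f : Fin r → ℕ → ℂ) (x : ℂ) (μ : Fin r → ℂ)
    (hH : (Matrix.of fun i j : Fin r => f j i).det ≠ 0)
    (hf : ∀ j k, f j (k + 2) = 2 * x * f j (k + 1) + (2 * k + μ j) * f j k)
    (A : ℕ → Fin r → ℂ) (hA : ∀ k j, f j k = ∑ i, A k i * f j i)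
    (y u : ℕ → ℂ) (ν : ℂ)
    (hy : ∀ k, y (k + 2) = 2 * x * y (k + 1) + (2 * k + ν) * y k - u k) :
    res (A (r + 2)) (r + 2) y = 2 * x * res (A (r + 1)) (r + 1) y
      + (2 * r + ν) * res (A r) r y - res (A r) r u
      + ∑ i : Fin r, A r i * (res (A (i + 2)) (i + 2) y - 2 * x * res (A (i + 1)) (i + 1) y
          - 2 * i * res (A i) i y) := by
  have hA' : ∀ k j, lc (A k) (f j) = f j k := fun k j => (hA k j).symm
  have hc0 : (fun i => A (r + 2) i - 2 * x * A (r + 1) i - 2 * r * A r i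
      - ∑ l : Fin r, A r l * (A (l + 2) i - 2 * x * A (l + 1) i - 2 * l * A l i)) = 0 := by
    apply Matrix.eq_zero_of_vecMul_eq_zero hH
    ext j
    have := key_lc A x (f j)
    simp only [hA'] at this
    change lc _ (f j) = 0
    rw [this]
    have h2 : ∀ l : Fin r, A r l * (f j (l + 2) - 2 * x * f j (l + 1) - 2 * l * f j l)
        = μ j * (A r l * f j l) := by
      intro l; rw [hf]; ring
    simp only [h2, ← Finset.mul_sum, ← hA]
    rw [hf]; ring
  have h1 := key_lc A x y
  rw [hc0] at h1
  have h0 : lc (0 : Fin r → ℂ) y = 0 := by simp [lc]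
  rw [h0] at h1
  have hr : ∀ k z, res (A k) k z = z k - lc (A k) z := fun _ _ => rfl
  have h3 : ∑ i : Fin r, A r i * (res (A (i + 2)) (i + 2) y
      - 2 * x * res (A (i + 1)) (i + 1) y - 2 * i * res (A i) i y)
      = ν * lc (A r) y - lc (A r) u
        - ∑ l : Fin r, A r l * (lc (A (l + 2)) y - 2 * x * lc (A (l + 1)) y
        - 2 * l * lc (A l) y) := by
    have hl : ∀ w, lc (A r) w = ∑ i, A r i * w i := fun _ => rfl
    rw [hl y, hl u, Finset.mul_sum, ← Finset.sum_sub_distrib, ← Finset.sum_sub_distrib]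
    refine Finset.sum_congr rfl fun i _ => ?_
    simp only [hr, hy]
    ring
  rw [h3]
  simp only [hr, hy]
  linear_combination h1

/-- `α_{r-1}`. -/
noncomputable def lastc : (r : ℕ) → (Fin r → ℂ) → ℂ
  | 0, _ => 0
  | r + 1, a => a (Fin.last r)

/-- collapsing the sum. -/
lemma key2 {r : ℕ} (A : ℕ → Fin r → ℂ)
    (h0 : ∀ (k : Fin r) (y : ℕ → ℂ), res (A k) k y = 0) (x : ℂ) :
    ∃ κ : ℂ, ∀ y : ℕ → ℂ,
      ∑ i : Fin r, A r i * (res (A (i + 2)) (i + 2) y - 2 * x * res (A (i + 1)) (i + 1) y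
          - 2 * i * res (A i) i y) =
      lastc r (A r) * res (A (r + 1)) (r + 1) y + κ * res (A r) r y := by
  have h0' : ∀ (k : ℕ) (y : ℕ → ℂ), k < r → res (A k) k y = 0 := fun k y hk => h0 ⟨k, hk⟩ y
  rcases r with _ | _ | r
  · exact ⟨0, fun y => by simp [lastc]⟩
  · refine ⟨-2 * x * A 1 0, fun y => ?_⟩
    have := h0' 0 y (by omega)
    simp [lastc, this]; ring
  · refine ⟨A (r + 2) (Fin.last r).castSucc - 2 * x * A (r + 2) (Fin.last (r + 1)), fun y => ?_⟩
    rw [Fin.sum_univ_castSucc, Fin.sum_univ_castSucc, Finset.sum_eq_zero]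
    · have h1 := h0' (r + 1) y (by omega)
      have h2 := h0' r y (by omega)
      simp only [lastc, Fin.val_castSucc, Fin.val_last, h1, h2, add_assoc, Nat.reduceAdd]
      ring
    · intro i _
      have hi := i.2
      simp only [Fin.val_castSucc]
      rw [h0' _ y (by omega), h0' _ y (by omega), h0' _ y (by omega)]
      ring

/-- The determinantal identity at a point. -/
lemma det_identity {r : ℕ} (f : Fin r → ℕ → ℂ) (x : ℂ) (μ : Fin r → ℂ)
    (hH : (Matrix.of fun i j : Fin r => f j i).det ≠ 0)
    (hf : ∀ j k, f j (k + 2) = 2 * x * f j (k + 1) + (2 * k + μ j) * f j k)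
    (g e : ℕ → ℂ) (ν : ℂ)
    (hg : ∀ k, g (k + 2) = 2 * x * g (k + 1) + (2 * k + ν) * g k)
    (he : ∀ k, e (k + 2) = 2 * x * e (k + 1) + (2 * k + ν) * e k - g k)
    (A : ℕ → Fin r → ℂ) (hA : ∀ k j, f j k = ∑ i, A k i * f j i)
    (h0 : ∀ (k : Fin r) (y : ℕ → ℂ), res (A k) k y = 0)
    (C : Fin (r + 2) → ℕ → ℂ) (hC1 : ∀ j, C (Fin.castAdd 2 j) = f j)
    (hC2 : C (Fin.natAdd r 0) = g) (hC3 : C (Fin.natAdd r 1) = e)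
    (C' : Fin (r + 1) → ℕ → ℂ) (hC'1 : ∀ j, C' (Fin.castAdd 1 j) = f j)
    (hC'2 : C' (Fin.natAdd r 0) = g) :
    (Matrix.of fun i j : Fin r => f j i).det *
      ((Matrix.of fun i j : Fin (r + 2) => C j i).updateRow (Fin.last (r + 1))
        (fun j => C j (r + 2))).det =
    (2 * x + lastc r (A r)) * (Matrix.of fun i j : Fin r => f j i).det *
      (Matrix.of fun i j : Fin (r + 2) => C j i).det
    - (Matrix.of fun i j : Fin (r + 1) => C' j i).det ^ 2 := by
  have hP := det_block f ![g] ![r] A hA (Matrix.of fun i j : Fin (r + 1) => C' j i)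
    (by simp [hC'1]) (by intro i j; fin_cases j; simp [← hC'2])
    (by intro i j; fin_cases i; simp [hC'1])
    (by intro i j; fin_cases i; fin_cases j; simp [← hC'2])
  have hW := det_block f ![g, e] ![r, r + 1] A hA (Matrix.of fun i j : Fin (r + 2) => C j i)
    (by simp [hC1]) (by intro i j; fin_cases j <;> simp [← hC2, ← hC3])
    (by intro i j; fin_cases i <;> simp [hC1])
    (by intro i j; fin_cases i <;> fin_cases j <;> simp [← hC2, ← hC3])
  have hlast : Fin.last (r + 1) = Fin.natAdd r (1 : Fin 2) := by ext; simp
  have hne1 : ∀ i : Fin r, Fin.castAdd 2 i ≠ Fin.last (r + 1) := by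
    intro i h; have := congrArg Fin.val h; simp at this; omega
  have hne2 : Fin.natAdd r (0 : Fin 2) ≠ Fin.last (r + 1) := by
    intro h; have := congrArg Fin.val h; simp at this
  have hW' := det_block f ![g, e] ![r, r + 2] A hA
    ((Matrix.of fun i j : Fin (r + 2) => C j i).updateRow (Fin.last (r + 1))
        (fun j => C j (r + 2)))
    (by intro i j; rw [Matrix.updateRow_ne (hne1 i)]; simp [hC1])
    (by intro i j; rw [Matrix.updateRow_ne (hne1 i)]; fin_cases j <;> simp [← hC2, ← hC3])
    (by
      intro i j; fin_cases i
      · have := Matrix.updateRow_ne (M := (Matrix.of fun i j : Fin (r + 2) => C j i))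
          (b := fun j => C j (r + 2)) hne2
        simp only [Fin.zero_eta]
        rw [this]; simp [hC1]
      · simp only [Fin.mk_one, ← hlast]
        rw [Matrix.updateRow_self]; simp [hC1])
    (by
      intro i j; fin_cases i
      · have := Matrix.updateRow_ne (M := (Matrix.of fun i j : Fin (r + 2) => C j i))
          (b := fun j => C j (r + 2)) hne2
        simp only [Fin.zero_eta]
        rw [this]; fin_cases j <;> simp [← hC2, ← hC3]
      · simp only [Fin.mk_one, ← hlast]
        rw [Matrix.updateRow_self]; fin_cases j <;> simp [← hC2, ← hC3])
  rw [hP, hW, hW']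
  rw [Matrix.det_fin_one, Matrix.det_fin_two, Matrix.det_fin_two]
  obtain ⟨κ, hκ⟩ := key2 A h0 x
  have kg := key f x μ hH hf A hA g 0 ν (by simpa using hg)
  have ke := key f x μ hH hf A hA e g ν he
  rw [hκ] at kg ke
  have hz : res (A r) r 0 = 0 := by simp [res]
  rw [hz] at kg
  simp only [Matrix.of_apply, Matrix.cons_val_zero, Matrix.cons_val_one]
  rw [kg, ke]
  ring

lemma hasDerivAt_H {r : ℕ} (f : Fin r → ℕ → ℂ → ℂ) (z : ℂ)
    (h : ∀ j k, HasDerivAt (f j k) (f j (k + 1) z) z)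
    (A : ℕ → Fin r → ℂ) (hA : ∀ k j, f j k z = ∑ i, A k i * f j i z) :
    HasDerivAt (fun w => (Matrix.of fun i j : Fin r => f j i w).det)
      (lastc r (A r) * (Matrix.of fun i j : Fin r => f j i z).det) z := by
  rcases r with _ | r
  · simp [lastc, hasDerivAt_const]
  · have := hasDerivAt_wron f z h
    convert! this using 1
    have h2 := Matrix.det_updateRow_sum (Matrix.of fun i j : Fin (r + 1) => f j i z)
      (Fin.last r) (A (r + 1))
    rw [smul_eq_mul] at h2
    rw [lastc, ← h2]
    congr 2
    ext j
    rw [hA (r + 1) j]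
    simp [Finset.sum_apply]

lemma herm_deriv (m : ℕ) : derivative (physHermite (m + 1)) =
    2 * ((m : ℝ[X]) + 1) * physHermite m := by
  induction m with
  | zero => simp [physHermite]
  | succ m ih =>
    have h1 : physHermite (m + 2) = 2 * X * physHermite (m + 1)
      - derivative (physHermite (m + 1)) := rfl
    have h2 : physHermite (m + 1) = 2 * X * physHermite m
      - derivative (physHermite m) := rfl
    have h3 : derivative (2 : ℝ[X]) = 0 := by simp
    have h4 : derivative (2 * ((m : ℝ[X]) + 1)) = 0 := by simp
    rw [h1, derivative_sub, derivative_mul, derivative_mul, h3, derivative_X, ih,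
      derivative_mul, h4]
    push_cast
    linear_combination (-2 * ((m : ℝ[X]) + 1)) * h2

lemma herm_ode (m : ℕ) : derivative (derivative (physHermite m)) =
    2 * X * derivative (physHermite m) - 2 * (m : ℝ[X]) * physHermite m := by
  have h1 : physHermite (m + 1) = 2 * X * physHermite m
      - derivative (physHermite m) := rfl
  have h := herm_deriv m
  rw [h1, derivative_sub, derivative_mul, derivative_mul, derivative_X] at h
  simp at h
  linear_combination -h

/-- jets of polynomials -/
noncomputable def pj (p : ℝ[X]) (k : ℕ) (z : ℂ) : ℂ :=
  aeval z ((fun q => derivative q)^[k] p)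

lemma pj_deriv (p : ℝ[X]) (k : ℕ) (z : ℂ) : HasDerivAt (pj p k) (pj p (k + 1) z) z := by
  unfold pj
  rw [Function.iterate_succ_apply']
  exact Polynomial.hasDerivAt_aeval _ _

lemma herm_rec (m k : ℕ) : (fun q => derivative q)^[k + 2] (physHermite m) =
    2 * X * (fun q => derivative q)^[k + 1] (physHermite m)
      + (2 * (k : ℝ[X]) - 2 * (m : ℝ[X])) * (fun q => derivative q)^[k] (physHermite m) := by
  induction k with
  | zero => simp [herm_ode]; ring
  | succ k ih =>
    have := congrArg derivative ih
    simp only [Function.iterate_succ_apply', derivative_add, derivative_mul, derivative_sub,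
      derivative_X, derivative_natCast, derivative_ofNat] at this ⊢
    rw [this]
    push_cast
    ring

lemma pj_rec (m k : ℕ) (z : ℂ) : pj (physHermite m) (k + 2) z =
    2 * z * pj (physHermite m) (k + 1) z + (2 * k + (-2 * m : ℂ)) * pj (physHermite m) k z := by
  unfold pj
  rw [herm_rec]
  have h2' : aeval z (2 : ℝ[X]) = (2 : ℂ) := map_ofNat _ 2
  simp only [map_add, map_mul, map_sub, aeval_X, map_natCast, h2']
  ring

lemma exists_eta (m : ℕ) : ∃ e e' : ℂ → ℂ, (∀ z, HasDerivAt e (e' z) z) ∧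
    ∀ z, HasDerivAt e' (2 * z * e' z - 2 * m * e z - aeval z (physHermite m)) z := by
  induction m with
  | zero =>
    have hd : Differentiable ℂ (fun z : ℂ => Complex.exp (-z ^ 2)) := by fun_prop
    obtain ⟨E, hE⟩ := hd.isExactOn_univ
    have hE : ∀ z, HasDerivAt E (Complex.exp (-z ^ 2)) z := by simpa using hE
    have hE' : ∀ z, HasDerivAt (fun z => - (Complex.exp (z ^ 2) * E z))
        (2 * z * (- (Complex.exp (z ^ 2) * E z)) - 1) z := by
      intro z
      have h1 : HasDerivAt (fun z : ℂ => Complex.exp (z ^ 2)) (Complex.exp (z ^ 2) * (2 * z)) z := by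
        simpa using (hasDerivAt_pow 2 z).cexp
      convert! (h1.mul (hE z)).neg using 1
      rw [← Complex.exp_add]
      simp; ring
    have hd2 : Differentiable ℂ (fun z => - (Complex.exp (z ^ 2) * E z)) :=
      fun z => (hE' z).differentiableAt
    obtain ⟨G, hG⟩ := hd2.isExactOn_univ
    refine ⟨G, _, by simpa using hG, fun z => ?_⟩
    simpa [physHermite] using hE' z
  | succ m ih =>
    obtain ⟨e, e', h1, h2⟩ := ih
    refine ⟨fun z => 2 * z * e z - e' z, fun z => (2 * m + 2) * e z + aeval z (physHermite m),
      fun z => ?_, fun z => ?_⟩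
    · have h3 : HasDerivAt (fun z : ℂ => 2 * z) 2 z := by simpa using (hasDerivAt_id z).const_mul 2
      convert! (h3.mul (h1 z)).sub (h2 z) using 1
      ring
    · convert! ((h1 z).const_mul (2 * m + 2 : ℂ)).add
        (Polynomial.hasDerivAt_aeval (physHermite m) z) using 1
      have h2' : aeval z (2 : ℝ[X]) = (2 : ℂ) := map_ofNat _ 2
      simp [physHermite, h2']
      ring

/-- jets of `η`. -/
noncomputable def ej (m : ℕ) (e e' : ℂ → ℂ) : ℕ → ℂ → ℂ
  | 0 => e
  | 1 => e'
  | k + 2 => fun z => 2 * z * ej m e e' (k + 1) z + (2 * k + (-2 * m : ℂ)) * ej m e e' k z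
      - pj (physHermite m) k z

lemma ej_deriv (m : ℕ) (e e' : ℂ → ℂ) (h1 : ∀ z, HasDerivAt e (e' z) z)
    (h2 : ∀ z, HasDerivAt e' (2 * z * e' z - 2 * m * e z - aeval z (physHermite m)) z)
    (k : ℕ) : ∀ z, HasDerivAt (ej m e e' k) (ej m e e' (k + 1) z) z := by
  induction k using Nat.twoStepInduction with
  | zero => exact h1
  | one =>
    intro z
    convert! h2 z using 1
    simp [ej, pj]
    ring
  | more k ih1 ih2 =>
    intro z
    have h3 : HasDerivAt (fun z : ℂ => 2 * z) 2 z := by simpa using (hasDerivAt_id z).const_mul 2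
    have h := ((h3.mul (ih2 z)).add ((ih1 z).const_mul (2 * k + (-2 * m : ℂ)))).sub
      (pj_deriv (physHermite m) k z)
    convert! h using 1
    have : ej m e e' (k + 2 + 1) z = 2 * z * ej m e e' (k + 2) z
      + (2 * (k + 1 : ℕ) + (-2 * m : ℂ)) * ej m e e' (k + 1) z
      - pj (physHermite m) (k + 1) z := rfl
    rw [this]
    push_cast
    ring

lemma aeval_wron {N : ℕ} (f : Fin N → ℝ[X]) (z : ℂ) :
    aeval z (Wron f) = (Matrix.of fun i j : Fin N => pj (f j) i z).det := by
  unfold Wron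
  rw [AlgHom.map_det]
  rfl

lemma main_deriv (r m : ℕ) (d : Fin r → ℕ) (C' : Fin (r + 1) → ℝ[X])
    (hC1 : ∀ j, C' (Fin.castAdd 1 j) = physHermite (d j))
    (hC2 : C' (Fin.natAdd r 0) = physHermite m) :
    ∃ F : ℂ → ℂ, ∀ z, aeval z (Wron fun j => physHermite (d j)) ≠ 0 →
      HasDerivAt F (aeval z (Wron C') ^ 2 * Complex.exp (-z ^ 2) /
        aeval z (Wron fun j => physHermite (d j)) ^ 2) z := by
  obtain ⟨e, e', h1, h2⟩ := exists_eta m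
  let f : Fin r → ℕ → ℂ → ℂ := fun j => pj (physHermite (d j))
  let C : Fin (r + 2) → ℕ → ℂ → ℂ :=
    Fin.append f ![pj (physHermite m), ej m e e']
  have hCc : ∀ j, C (Fin.castAdd 2 j) = f j := fun j => Fin.append_left _ _ j
  have hC0 : C (Fin.natAdd r 0) = pj (physHermite m) := Fin.append_right _ _ 0
  have hC1' : C (Fin.natAdd r 1) = ej m e e' := Fin.append_right _ _ 1
  have hCd : ∀ z j k, HasDerivAt (C j k) (C j (k + 1) z) z := by
    intro z j k
    induction j using Fin.addCases with
    | left j => rw [hCc]; exact pj_deriv _ _ _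
    | right j =>
      fin_cases j
      · simp only [Fin.zero_eta]; rw [hC0]; exact pj_deriv _ _ _
      · simp only [Fin.mk_one]; rw [hC1']; exact ej_deriv m e e' h1 h2 k z
  refine ⟨fun z => - (Complex.exp (-z ^ 2) * (Matrix.of fun i j : Fin (r + 2) => C j i z).det /
    (Matrix.of fun i j : Fin r => f j i z).det), fun z hz => ?_⟩
  rw [aeval_wron] at hz
  rw [aeval_wron, aeval_wron]
  change (Matrix.of fun i j : Fin r => f j i z).det ≠ 0 at hz
  obtain ⟨A, hA, hA0⟩ := exists_coeff (fun j k => f j k z) hz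
  have hH := hasDerivAt_H f z (fun j k => pj_deriv _ _ _) A hA
  have hW := hasDerivAt_wron C z (hCd z)
  have hid := det_identity (fun j k => f j k z) z (fun j => (-2 * d j : ℂ)) hz
    (fun j k => pj_rec (d j) k z) (fun k => pj (physHermite m) k z) (fun k => ej m e e' k z)
    (-2 * m : ℂ) (fun k => pj_rec m k z) (fun k => rfl) A hA hA0
    (fun j k => C j k z) (fun j => by rw [hCc]) (by rw [hC0]) (by rw [hC1'])
    (fun j k => pj (C' j) k z) (fun j => by rw [hC1]) (by rw [hC2])
  have hexp : HasDerivAt (fun z : ℂ => Complex.exp (-z ^ 2))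
      (Complex.exp (-z ^ 2) * (-(2 * z))) z := by
    simpa using (hasDerivAt_pow 2 z).neg.cexp
  have := ((hexp.mul hW).div hH hz).neg
  convert! this using 1
  change _ / (Matrix.of fun i j : Fin r => f j i z).det ^ 2 = _
  rw [← neg_div]
  congr 1
  simp only [Pi.mul_apply]
  linear_combination Complex.exp (-z ^ 2) * hid

end ResVan

/-- Proposition 5.1: the meromorphic function `x ↦ P_n(x)² e^{-x²} / H_λ(x)²` has
vanishing residues at each of its poles (the zeros of `H_λ`): the contour integral
over a small circle around any zero `z₀` of `H_λ` vanishes. -/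
theorem residues_vanish
    (r : ℕ) (lam : Fin r → ℕ) (hpart : IsPartition r lam)
    (n : ℕ) (hn : XDegSeq r lam n)
    (z₀ : ℂ) (hz : Polynomial.aeval z₀ (genHermite r lam) = 0)
    (ε : ℝ) (hε : 0 < ε)
    (honly : ∀ w : ℂ, Polynomial.aeval w (genHermite r lam) = 0 →
      w ∈ Metric.closedBall z₀ ε → w = z₀) :
    (∮ z in C(z₀, ε),
      (Polynomial.aeval z (XHermite r lam n)) ^ 2 * Complex.exp (-z ^ 2) /
        (Polynomial.aeval z (genHermite r lam)) ^ 2) = 0 := by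
  obtain ⟨F, hF⟩ := ResVan.main_deriv r (n + r - ∑ i, lam i)
    (fun j => lam (Fin.rev j) + j)
    (fun j : Fin (r + 1) =>
      if h : (j : ℕ) < r then physHermite (lam (Fin.rev ⟨(j : ℕ), h⟩) + j)
      else physHermite (n + r - ∑ i, lam i))
    (fun j => by simp) (by simp)
  refine circleIntegral.integral_eq_zero_of_hasDerivWithinAt (f := F) hε.le fun z hzs => ?_
  refine (hF z fun h0 => ?_).hasDerivWithinAt
  have hzz := honly z h0 (Metric.sphere_subset_closedBall hzs)
  rw [hzz] at hzs
  simp at hzs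
  exact hε.ne hzs
end

section
/- Let λ be a partition of length r and let n, m ∈ N_λ with n ≠ m. Then at every real x with H_λ(x) ≠ 0, the weighted product P_n(x) P_m(x) e^{−x²}/H_λ(x)² equals the derivative at x of the function y ↦ [(P_n(y) P_m'(y) − P_n'(y) P_m(y)) / (2(n − m))] · e^{−y²}/H_λ(y)². -/
open Polynomial

theorem aux_minor {K : Type*} [Field K] {r : ℕ} {I J : Type*} (e : I → J → K)
    (p : Fin r → I) (q : Fin r → J) (i : I) (j : J)
    [Invertible (Matrix.of fun a b => e (p a) (q b))] :
    (Matrix.of fun a b : Fin (r + 1) => e (Fin.snoc (α := fun _ => I) p i a)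
      (Fin.snoc (α := fun _ => J) q j b)).det =
    (Matrix.of fun a b => e (p a) (q b)).det *
      (e i j - ((Matrix.of fun (_ : Fin 1) b => e i (q b)) *
        ⅟(Matrix.of fun a b => e (p a) (q b)) *
        (Matrix.of fun a (_ : Fin 1) => e (p a) j)) 0 0) := by
  rw [← Matrix.det_submatrix_equiv_self (finSumFinEquiv (m := r) (n := 1))]
  have : (Matrix.of fun a b : Fin (r + 1) => e (Fin.snoc (α := fun _ => I) p i a)
      (Fin.snoc (α := fun _ => J) q j b)).submatrix (finSumFinEquiv (m := r) (n := 1))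
        (finSumFinEquiv (m := r) (n := 1)) =
      Matrix.fromBlocks (Matrix.of fun a b => e (p a) (q b))
        (Matrix.of fun a (_ : Fin 1) => e (p a) j)
        (Matrix.of fun (_ : Fin 1) b => e i (q b)) (Matrix.of fun _ _ => e i j) := by
    have h1 : ∀ a : Fin r, Fin.castAdd 1 a = a.castSucc := fun a => rfl
    have h2 : Fin.natAdd r (0 : Fin 1) = Fin.last r := rfl
    ext a b
    rcases a with a | a <;> rcases b with b | b <;>
      simp [h1, h2, Fin.fin_one_eq_zero]
  rw [this, Matrix.det_fromBlocks₁₁]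
  simp

theorem aux_dj_field {K : Type*} [Field K] {r : ℕ} {I J : Type*} (e : I → J → K)
    (p : Fin r → I) (q : Fin r → J) (i₀ i₁ : I) (j₀ j₁ : J)
    (h : (Matrix.of fun a b => e (p a) (q b)).det ≠ 0) :
    (Matrix.of fun a b => e (p a) (q b)).det *
    (Matrix.of fun a b : Fin (r + 2) =>
      e (Fin.snoc (α := fun _ => I) (Fin.snoc (α := fun _ => I) p i₀ : Fin (r + 1) → I) i₁ a)
        (Fin.snoc (α := fun _ => J) (Fin.snoc (α := fun _ => J) q j₀ : Fin (r + 1) → J) j₁ b)).det =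
    (Matrix.of fun a b : Fin (r + 1) => e (Fin.snoc (α := fun _ => I) p i₀ a)
      (Fin.snoc (α := fun _ => J) q j₀ b)).det *
    (Matrix.of fun a b : Fin (r + 1) => e (Fin.snoc (α := fun _ => I) p i₁ a)
      (Fin.snoc (α := fun _ => J) q j₁ b)).det -
    (Matrix.of fun a b : Fin (r + 1) => e (Fin.snoc (α := fun _ => I) p i₀ a)
      (Fin.snoc (α := fun _ => J) q j₁ b)).det *
    (Matrix.of fun a b : Fin (r + 1) => e (Fin.snoc (α := fun _ => I) p i₁ a)
      (Fin.snoc (α := fun _ => J) q j₀ b)).det := by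
  have : Invertible (Matrix.of fun a b => e (p a) (q b)) :=
    Matrix.invertibleOfIsUnitDet _ (isUnit_iff_ne_zero.mpr h)
  simp only [aux_minor]
  rw [← Matrix.det_submatrix_equiv_self (finSumFinEquiv (m := r) (n := 2))]
  have : (Matrix.of fun a b : Fin (r + 2) =>
      e (Fin.snoc (α := fun _ => I) (Fin.snoc (α := fun _ => I) p i₀ : Fin (r + 1) → I) i₁ a)
        (Fin.snoc (α := fun _ => J) (Fin.snoc (α := fun _ => J) q j₀ : Fin (r + 1) → J) j₁ b)).submatrix
        (finSumFinEquiv (m := r) (n := 2)) (finSumFinEquiv (m := r) (n := 2)) =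
      Matrix.fromBlocks (Matrix.of fun a b => e (p a) (q b))
        (Matrix.of fun a (k : Fin 2) => e (p a) (![j₀, j₁] k))
        (Matrix.of fun (k : Fin 2) b => e (![i₀, i₁] k) (q b))
        (Matrix.of fun k l => e (![i₀, i₁] k) (![j₀, j₁] l)) := by
    have h1 : ∀ a : Fin r, Fin.castAdd 2 a = a.castSucc.castSucc := fun a => rfl
    have h2 : Fin.natAdd r (0 : Fin 2) = (Fin.last r).castSucc := rfl
    have h3 : Fin.natAdd r (1 : Fin 2) = Fin.last (r + 1) := rfl
    ext a b
    rcases a with a | a <;> rcases b with b | b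
    · simp [h1]
    · fin_cases b <;> simp [h1, h2, h3]
    · fin_cases a <;> simp [h1, h2, h3]
    · fin_cases a <;> fin_cases b <;> simp [h2, h3]
  rw [this, Matrix.det_fromBlocks₁₁, Matrix.det_fin_two]
  simp [Matrix.mul_apply]
  ring

theorem aux_dj {R : Type*} [CommRing R] [IsDomain R] {r : ℕ} {I J : Type*} (e : I → J → R)
    (p : Fin r → I) (q : Fin r → J) (i₀ i₁ : I) (j₀ j₁ : J)
    (h : (Matrix.of fun a b => e (p a) (q b)).det ≠ 0) :
    (Matrix.of fun a b => e (p a) (q b)).det *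
    (Matrix.of fun a b : Fin (r + 2) =>
      e (Fin.snoc (α := fun _ => I) (Fin.snoc (α := fun _ => I) p i₀ : Fin (r + 1) → I) i₁ a)
        (Fin.snoc (α := fun _ => J) (Fin.snoc (α := fun _ => J) q j₀ : Fin (r + 1) → J) j₁ b)).det =
    (Matrix.of fun a b : Fin (r + 1) => e (Fin.snoc (α := fun _ => I) p i₀ a)
      (Fin.snoc (α := fun _ => J) q j₀ b)).det *
    (Matrix.of fun a b : Fin (r + 1) => e (Fin.snoc (α := fun _ => I) p i₁ a)
      (Fin.snoc (α := fun _ => J) q j₁ b)).det -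
    (Matrix.of fun a b : Fin (r + 1) => e (Fin.snoc (α := fun _ => I) p i₀ a)
      (Fin.snoc (α := fun _ => J) q j₁ b)).det *
    (Matrix.of fun a b : Fin (r + 1) => e (Fin.snoc (α := fun _ => I) p i₁ a)
      (Fin.snoc (α := fun _ => J) q j₀ b)).det := by
  have hinj := IsFractionRing.injective R (FractionRing R)
  have hd : ∀ {k : ℕ} (M : Fin k → Fin k → R),
      algebraMap R (FractionRing R) (Matrix.of M).det =
        (Matrix.of fun a b => algebraMap R (FractionRing R) (M a b)).det := by
    intro k M
    rw [RingHom.map_det]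
    rfl
  apply hinj
  simp only [map_mul, map_sub, hd]
  apply aux_dj_field (fun a b => algebraMap R (FractionRing R) (e a b))
  rw [← hd]
  exact fun h0 => h (hinj (by rw [h0, map_zero]))

theorem aux_derivative_det {k : ℕ} (M : Matrix (Fin k) (Fin k) ℝ[X]) :
    derivative M.det = ∑ i, (M.updateRow i (fun j => derivative (M i j))).det := by
  have hdet : ∀ N : Matrix (Fin k) (Fin k) ℝ[X],
      N.det = ∑ σ : Equiv.Perm (Fin k), (((Equiv.Perm.sign σ : ℤˣ) : ℤ) : ℝ[X]) * ∏ i, N i (σ i) := by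
    intro N
    rw [← Matrix.det_transpose, Matrix.det_apply']
    rfl
  simp only [hdet]
  rw [derivative_sum, Finset.sum_comm]
  refine Finset.sum_congr rfl fun σ _ => ?_
  rw [← Finset.mul_sum, derivative_intCast_mul, derivative_prod_finset]
  congr 1
  refine Finset.sum_congr rfl fun i _ => ?_
  rw [← Finset.mul_prod_erase Finset.univ _ (Finset.mem_univ i), mul_comm]
  congr 1
  · simp
  · refine Finset.prod_congr rfl fun j hj => ?_
    rw [Matrix.updateRow_ne (Finset.ne_of_mem_erase hj)]

/-- iterated derivative, as an entry function -/
noncomputable def auxE (k : ℕ) (f : ℝ[X]) : ℝ[X] := (fun p => derivative p)^[k] f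

theorem aux_snoc_val (r : ℕ) (a : Fin (r + 1)) :
    Fin.snoc (α := fun _ => ℕ) (fun i : Fin r => (i : ℕ)) r a = a := by
  induction a using Fin.lastCases <;> simp

theorem aux_derivative_wron {r : ℕ} (F : Fin (r + 1) → ℝ[X]) :
    derivative (Wron F) = (Matrix.of fun a b : Fin (r + 1) =>
      auxE (Fin.snoc (α := fun _ => ℕ) (fun i : Fin r => (i : ℕ)) (r + 1) a) (F b)).det := by
  unfold Wron
  rw [aux_derivative_det, Fin.sum_univ_castSucc, Finset.sum_eq_zero, zero_add]
  · congr 1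
    ext1 a b
    induction a using Fin.lastCases with
    | last => simp [auxE, Function.iterate_succ_apply']
    | cast a => simp [auxE, Matrix.updateRow_apply, Fin.castSucc_ne_last]
  · intro i _
    apply Matrix.det_zero_of_row_eq (i := i.castSucc) (j := i.succ)
    · exact (Fin.castSucc_lt_succ).ne
    · rw [Matrix.updateRow_self, Matrix.updateRow_ne (Fin.castSucc_lt_succ).ne']
      funext b
      simp [Function.iterate_succ_apply']

theorem aux_sylvester {r : ℕ} (F : Fin r → ℝ[X]) (f g : ℝ[X]) (h : Wron F ≠ 0) :
    Wron F * Wron (Fin.snoc (α := fun _ => ℝ[X])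
      (Fin.snoc (α := fun _ => ℝ[X]) F f : Fin (r + 1) → ℝ[X]) g) =
    Wron (Fin.snoc (α := fun _ => ℝ[X]) F f) * derivative (Wron (Fin.snoc (α := fun _ => ℝ[X]) F g))
    - derivative (Wron (Fin.snoc (α := fun _ => ℝ[X]) F f)) *
      Wron (Fin.snoc (α := fun _ => ℝ[X]) F g) := by
  have key := aux_dj auxE (fun i : Fin r => (i : ℕ)) F r (r + 1) f g h
  rw [aux_derivative_wron, aux_derivative_wron]
  have hs : (Fin.snoc (α := fun _ => ℕ) (fun i : Fin r => (i : ℕ)) r : Fin (r + 1) → ℕ)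
      = fun a : Fin (r + 1) => (a : ℕ) := funext (aux_snoc_val r)
  rw [hs] at key
  have hs2 : (Fin.snoc (α := fun _ => ℕ) (fun i : Fin (r + 1) => (i : ℕ)) (r + 1) : Fin (r + 2) → ℕ)
      = fun a : Fin (r + 2) => (a : ℕ) := funext (aux_snoc_val (r + 1))
  rw [hs2] at key
  refine Eq.trans key ?_
  unfold Wron auxE
  ring

/-- the bilinear form of the exceptional equation -/
def AuxODE (H P : ℝ[X]) (c : ℝ) : Prop :=
  H * derivative (derivative P) = 2 * X * H * derivative P + 2 * derivative H * derivative P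
    - (derivative (derivative H) + 2 * X * derivative H) * P + C c * H * P

theorem aux_cross {H a b : ℝ[X]} {α β : ℝ} (ha : AuxODE H a α) (hb : AuxODE H b β) :
    H * derivative (a * derivative b - derivative a * b) =
      (2 * X * H + 2 * derivative H) * (a * derivative b - derivative a * b)
      + C (β - α) * H * (a * b) := by
  unfold AuxODE at ha hb
  simp only [derivative_sub, derivative_mul, C_sub]
  linear_combination a * hb - b * ha

theorem aux_darboux {H a b Q : ℝ[X]} {α β : ℝ} (hH : H ≠ 0) (ha : AuxODE H a α)
    (hb : AuxODE H b β) (hQ : H * Q = a * derivative b - derivative a * b) :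
    AuxODE a Q (β + 2) := by
  have hc := aux_cross ha hb
  rw [← hQ] at hc
  have h1 : H * derivative Q = (2 * X * H + derivative H) * Q + C (β - α) * (a * b) := by
    apply mul_left_cancel₀ hH
    rw [derivative_mul] at hc
    linear_combination hc
  have h2 := congrArg derivative h1
  simp only [derivative_add, derivative_mul, derivative_C, derivative_X, derivative_ofNat] at h2
  unfold AuxODE at *
  apply mul_left_cancel₀ hH
  simp only [C_sub, C_add] at *
  have h3 : (C (2 : ℝ) : ℝ[X]) = 2 := rfl
  rw [h3]
  linear_combination a * h2 - 2 * derivative a * h1 + Q * ha - (C β - C α) * a * hQ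

/-- eigenfunction of the Hermite operator -/
def AuxEig (f : ℝ[X]) (c : ℝ) : Prop :=
  derivative (derivative f) = 2 * X * derivative f + C c * f

theorem aux_wron_zero (F : Fin 0 → ℝ[X]) : Wron F = 1 := by
  simp [Wron]

theorem aux_wron_one (F : Fin 1 → ℝ[X]) : Wron F = F 0 := by
  simp [Wron]

theorem aux_ode (r : ℕ) (hNV : ∀ k < r, ∀ (F : Fin k → ℝ[X]) (μ : Fin k → ℝ),
      (∀ i, AuxEig (F i) (μ i)) → (∀ i, F i ≠ 0) → Function.Injective μ → Wron F ≠ 0) :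
    ∀ (F : Fin r → ℝ[X]) (μ : Fin r → ℝ) (g : ℝ[X]) (ν : ℝ),
      (∀ i, AuxEig (F i) (μ i)) → (∀ i, F i ≠ 0) → Function.Injective μ → AuxEig g ν →
      AuxODE (Wron F) (Wron (Fin.snoc (α := fun _ => ℝ[X]) F g)) (ν + 2 * r) := by
  induction r with
  | zero =>
    intro F μ g ν _ _ _ hg
    rw [aux_wron_zero, aux_wron_one]
    unfold AuxODE
    unfold AuxEig at hg
    have : (Fin.snoc (α := fun _ => ℝ[X]) F g : Fin 1 → ℝ[X]) 0 = g := by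
      simp [Fin.snoc]
    rw [this, hg]
    simp
  | succ r ih =>
    intro F μ g ν hF hF0 hμ hg
    have hinj : Function.Injective (fun i : Fin r => μ i.castSucc) :=
      hμ.comp (Fin.castSucc_injective r)
    have ih' := ih (fun k hk => hNV k (by omega)) (fun i => F i.castSucc) (fun i => μ i.castSucc)
    have hH := hNV r (by omega) (fun i => F i.castSucc) (fun i => μ i.castSucc)
      (fun i => hF _) (fun i => hF0 _) hinj
    have hFs : F = Fin.snoc (α := fun _ => ℝ[X]) (fun i : Fin r => F i.castSucc) (F (Fin.last r)) := by
      funext a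
      induction a using Fin.lastCases <;> simp
    have ha := ih' (F (Fin.last r)) _ (fun i => hF _) (fun i => hF0 _) hinj (hF _)
    have hb := ih' g ν (fun i => hF _) (fun i => hF0 _) hinj hg
    have hS := aux_sylvester (fun i : Fin r => F i.castSucc) (F (Fin.last r)) g hH
    rw [← hFs] at ha hS
    have := aux_darboux hH ha hb hS
    convert this using 1
    push_cast
    ring

theorem aux_nv (r : ℕ) : ∀ (F : Fin r → ℝ[X]) (μ : Fin r → ℝ),
      (∀ i, AuxEig (F i) (μ i)) → (∀ i, F i ≠ 0) → Function.Injective μ → Wron F ≠ 0 := by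
  induction r using Nat.strong_induction_on with
  | _ r ih =>
    match r with
    | 0 => intro F μ _ _ _; rw [aux_wron_zero]; exact one_ne_zero
    | 1 => intro F μ _ h _; rw [aux_wron_one]; exact h 0
    | r + 2 =>
      intro F μ hF hF0 hμ
      set F0 : Fin r → ℝ[X] := fun i => F i.castSucc.castSucc with hF0def
      set f := F (Fin.last r).castSucc with hf
      set g := F (Fin.last (r + 1)) with hg
      have hinj : Function.Injective (fun i : Fin r => μ i.castSucc.castSucc) :=
        hμ.comp ((Fin.castSucc_injective _).comp (Fin.castSucc_injective r))
      have hH := ih r (by omega) F0 (fun i => μ i.castSucc.castSucc)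
        (fun i => hF _) (fun i => hF0 _) hinj
      have hODE := aux_ode r (fun k hk => ih k (by omega)) F0 (fun i => μ i.castSucc.castSucc)
      have ha := hODE f _ (fun i => hF _) (fun i => hF0 _) hinj (hF _)
      have hb := hODE g _ (fun i => hF _) (fun i => hF0 _) hinj (hF _)
      have hext : ∀ k : Fin (r + 2), (∀ i : Fin r, i.castSucc.castSucc ≠ k) →
          Wron (Fin.snoc (α := fun _ => ℝ[X]) F0 (F k)) ≠ 0 := by
        intro k hk
        apply ih (r + 1) (by omega) _ (fun i : Fin (r + 1) => μ (Fin.snoc (α := fun _ => Fin (r + 2))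
          (fun i : Fin r => i.castSucc.castSucc) k i))
        · intro i
          induction i using Fin.lastCases with
          | last => simpa using hF _
          | cast i => simpa using hF _
        · intro i
          induction i using Fin.lastCases with
          | last => simpa using hF0 _
          | cast i => simpa using hF0 _
        · apply hμ.comp
          intro i j hij
          induction i using Fin.lastCases with
          | last =>
            induction j using Fin.lastCases with
            | last => rfl
            | cast j => simp at hij; exact absurd hij.symm (hk j)
          | cast i =>
            induction j using Fin.lastCases with
            | last => simp at hij; exact absurd hij (hk i)
            | cast j => simpa using hij
      have ha0 := hext (Fin.last r).castSucc (fun i h => by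
        have := congrArg Fin.val h; have := i.2; simp at *)
      have hb0 := hext (Fin.last (r + 1)) (fun i h => by
        have := congrArg Fin.val h; have := i.2; simp at *)
      have hS := aux_sylvester F0 f g hH
      have hFs : F = Fin.snoc (α := fun _ => ℝ[X])
          (Fin.snoc (α := fun _ => ℝ[X]) F0 f : Fin (r + 1) → ℝ[X]) g := by
        funext a
        induction a using Fin.lastCases with
        | last => simp [hg]
        | cast a => induction a using Fin.lastCases <;> simp [hf, hF0def]
      rw [← hFs] at hS
      intro h0
      rw [h0, mul_zero] at hS
      have hc := aux_cross ha hb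
      rw [← hS] at hc
      simp only [derivative_zero, mul_zero, zero_add] at hc
      have hne : μ (Fin.last (r + 1)) ≠ μ (Fin.last r).castSucc := by
        intro h
        have := congrArg Fin.val (hμ h)
        simp at this
      refine mul_ne_zero (mul_ne_zero ?_ hH) (mul_ne_zero ha0 hb0) hc.symm
      rw [Ne, C_eq_zero]
      intro h
      apply hne
      linarith

theorem aux_hermite_eig (n : ℕ) : AuxEig (physHermite n) (-2 * n) := by
  unfold AuxEig
  induction n with
  | zero => simp [physHermite]
  | succ n ih =>
    have h1 : derivative (physHermite (n + 1)) = C (2 * ((n : ℝ) + 1)) * physHermite n := by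
      simp only [physHermite, derivative_sub, derivative_mul, ih, derivative_X, derivative_ofNat,
        C_mul, C_add, C_neg, C_1]
      have h3 : (C (2 : ℝ) : ℝ[X]) = 2 := rfl
      rw [h3]
      ring
    rw [h1, derivative_mul, derivative_C]
    simp only [physHermite, C_mul, C_add, C_neg, C_1]
    push_cast
    simp only [C_add, C_1]
    ring

theorem aux_hermite_ne (n : ℕ) : physHermite n ≠ 0 := by
  induction n with
  | zero => simp [physHermite]
  | succ n ih =>
    intro h
    have he := aux_hermite_eig n
    unfold AuxEig at he
    have h1 := congrArg derivative h
    simp only [physHermite, derivative_sub, derivative_mul, he, derivative_X, derivative_ofNat,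
      derivative_zero] at h1
    have h2 : C (2 * ((n : ℝ) + 1)) * physHermite n = 0 := by
      rw [← h1]
      simp only [C_mul, C_add, C_neg, C_1]
      have h3 : (C (2 : ℝ) : ℝ[X]) = 2 := rfl
      rw [h3]
      ring
    rcases mul_eq_zero.mp h2 with h4 | h4
    · rw [C_eq_zero] at h4
      have : (0 : ℝ) ≤ n := Nat.cast_nonneg n
      linarith
    · exact ih h4

theorem aux_xhermite_ode (r : ℕ) (lam : Fin r → ℕ) (hpart : IsPartition r lam) (n : ℕ) :
    AuxODE (genHermite r lam) (XHermite r lam n)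
      (-2 * ((n + r - ∑ i, lam i : ℕ) : ℝ) + 2 * r) := by
  have hX : XHermite r lam n = Wron (Fin.snoc (α := fun _ => ℝ[X])
      (fun j : Fin r => physHermite (lam (Fin.rev j) + j)) (physHermite (n + r - ∑ i, lam i))) := by
    unfold XHermite
    congr 1
  rw [hX]
  unfold genHermite
  apply aux_ode r (fun k _ => aux_nv k) _ (fun j => -2 * ((lam (Fin.rev j) + j : ℕ) : ℝ))
  · intro i; exact aux_hermite_eig _
  · intro i; exact aux_hermite_ne _
  · have hlt : ∀ i j : Fin r, i < j → lam (Fin.rev i) + i < lam (Fin.rev j) + j := by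
      intro i j hij
      have := hpart.1 (Fin.rev j) (Fin.rev i) (Fin.rev_le_rev.mpr hij.le)
      have h2 : (i : ℕ) < j := hij
      omega
    intro i j hij
    have hij' : lam (Fin.rev i) + i = lam (Fin.rev j) + j := by
      have h : ((lam (Fin.rev i) + i : ℕ) : ℝ) = ((lam (Fin.rev j) + j : ℕ) : ℝ) := by
        simp only at hij
        linarith
      exact_mod_cast h
    rcases lt_trichotomy i j with h | h | h
    · have := hlt i j h; omega
    · exact h
    · have := hlt j i h; omega
  · exact aux_hermite_eig _

/-- Eq. (8): for `n, m ∈ N_λ` with `n ≠ m`, at every real `x` with `H_λ(x) ≠ 0`,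
`P_n(x) P_m(x) e^{-x²}/H_λ(x)²` is the derivative at `x` of
`y ↦ (P_n(y) P_m'(y) - P_n'(y) P_m(y))/(2(n-m)) · e^{-y²}/H_λ(y)²`. -/
theorem XHermite_perfect_derivative
    (r : ℕ) (lam : Fin r → ℕ) (hpart : IsPartition r lam)
    (n m : ℕ) (hn : XDegSeq r lam n) (hm : XDegSeq r lam m) (hnm : n ≠ m)
    (x : ℝ) (hx : (genHermite r lam).eval x ≠ 0) :
    HasDerivAt
      (fun y : ℝ =>
        ((XHermite r lam n).eval y * (derivative (XHermite r lam m)).eval y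
            - (derivative (XHermite r lam n)).eval y * (XHermite r lam m).eval y) /
          (2 * ((n : ℝ) - (m : ℝ))) *
          (Real.exp (-y ^ 2) / ((genHermite r lam).eval y) ^ 2))
      ((XHermite r lam n).eval x * (XHermite r lam m).eval x *
        (Real.exp (-x ^ 2) / ((genHermite r lam).eval x) ^ 2)) x := by
  have hc := aux_cross (aux_xhermite_ode r lam hpart n) (aux_xhermite_ode r lam hpart m)
  have hval : (-2 * ((m + r - ∑ i, lam i : ℕ) : ℝ) + 2 * r) -
      (-2 * ((n + r - ∑ i, lam i : ℕ) : ℝ) + 2 * r) = 2 * ((n : ℝ) - m) := by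
    rw [Nat.cast_sub hn.1, Nat.cast_sub hm.1]
    push_cast
    ring
  rw [hval] at hc
  have hne : (n : ℝ) - m ≠ 0 := sub_ne_zero.mpr (by exact_mod_cast hnm)
  set H := genHermite r lam
  set a := XHermite r lam n
  set b := XHermite r lam m
  have hce := congrArg (eval x) hc
  have hW := (a * derivative b - derivative a * b).hasDerivAt x
  have hHd := H.hasDerivAt x
  have hE : HasDerivAt (fun y : ℝ => Real.exp (-y ^ 2)) (Real.exp (-x ^ 2) * (-(2 * x))) x := by
    have h := ((hasDerivAt_pow 2 x).neg).exp
    simpa using h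
  have hfin := (hW.div_const (2 * ((n : ℝ) - m))).mul (hE.div (hHd.pow 2) (pow_ne_zero 2 hx))
  simp only [eval_sub, eval_mul, eval_add, eval_X, eval_C, eval_ofNat] at hfin hce
  refine HasDerivAt.congr_deriv (f := _) hfin ?_
  generalize eval x (derivative (a * derivative b - derivative a * b)) = w' at *
  have hw : w' = ((2 * x * eval x H + 2 * eval x (derivative H)) *
      (eval x a * eval x (derivative b) - eval x (derivative a) * eval x b) +
      2 * ((n : ℝ) - m) * eval x H * (eval x a * eval x b)) / eval x H := by
    rw [eq_div_iff hx]
    linear_combination hce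
  rw [hw]
  simp
  field_simp
  ring
end

section
/- Let λ be an even partition of length r (so that H_λ has no real zeros and W_λ(x) = e^{−x²}/H_λ(x)² is a well-defined weight function on ℝ). Then for all n, m ∈ N_λ with n ≠ m, ∫_{−∞}^{∞} P_n(x) P_m(x) e^{−x²}/H_λ(x)² dx = 0. -/
open Polynomial

/-! ### Hermite differential equation -/

theorem physHermite_ode (n : ℕ) :
    derivative (derivative (physHermite n)) =
      2 * X * derivative (physHermite n) - C (2 * (n : ℝ)) * physHermite n := by
  induction n with
  | zero => simp [physHermite]
  | succ n ih =>
    have h1 : derivative (physHermite (n + 1)) = C (2 * ((n : ℝ) + 1)) * physHermite n := by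
      rw [physHermite, derivative_sub, ih]
      simp only [derivative_mul, derivative_X, derivative_ofNat, map_mul, map_add, map_one]
      have : (C 2 : ℝ[X]) = 2 := rfl
      rw [this]
      ring
    rw [h1, derivative_C_mul]
    have h2 : derivative (physHermite n) = 2 * X * physHermite n - physHermite (n + 1) := by
      rw [physHermite]; ring
    rw [h2]
    push_cast
    ring

/-! ### Darboux-Crum in a differential field -/

section Crum

variable {K : Type*} [Field K] (D : Derivation ℤ K K)

/-- Wronskian in a differential field. -/
noncomputable def WrK {m : ℕ} (f : Fin m → K) : K :=
  Matrix.det (Matrix.of fun i j : Fin m => D^[(i : ℕ)] (f j))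

theorem iterate_coeffs (s : K) (i : ℕ) :
    ∃ c : ℕ → K, (∀ l, i < l → c l = 0) ∧ ∀ f : K, D^[i] (D f - s * f) =
      D^[i + 1] f - ∑ l ∈ Finset.range (i + 1), c l * D^[l] f := by
  induction i with
  | zero =>
    refine ⟨fun l => if l = 0 then s else 0, ?_, ?_⟩
    · intro l hl
      simp; omega
    · intro f; simp
  | succ i ih =>
    obtain ⟨c, hc0, hc⟩ := ih
    refine ⟨fun l => D (c l) + (if l = 0 then 0 else c (l - 1)), ?_, ?_⟩
    · intro l hl
      have h1 : l ≠ 0 := by omega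
      simp only [h1, if_false]
      rw [hc0 l (by omega), hc0 (l - 1) (by omega)]; simp
    · intro f
      rw [Function.iterate_succ_apply', hc f, map_sub, map_sum]
      rw [← Function.iterate_succ_apply' D]
      congr 1
      simp only [add_mul, Finset.sum_add_distrib]
      rw [Finset.sum_range_succ (fun l => D (c l) * D^[l] f) (i + 1)]
      rw [Finset.sum_range_succ' (fun l => (if l = 0 then 0 else c (l - 1)) * D^[l] f) (i + 1)]
      rw [hc0 (i + 1) (by omega)]
      simp only [map_zero, zero_mul, add_zero, if_true]
      rw [← Finset.sum_add_distrib]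
      apply Finset.sum_congr rfl
      intro l _
      rw [Derivation.leibniz]
      simp only [smul_eq_mul, Nat.add_one_ne_zero, if_false, Nat.add_sub_cancel]
      rw [Function.iterate_succ_apply' D]
      ring

theorem WrK_succ {m : ℕ} (F : Fin (m + 1) → K) (h0 : F 0 ≠ 0) :
    WrK D F = F 0 * WrK D (fun j : Fin m => D (F j.succ) - D (F 0) / F 0 * F j.succ) := by
  set s : K := D (F 0) / F 0 with hs
  choose c hc0 hc using iterate_coeffs D s
  let T : Matrix (Fin (m + 1)) (Fin (m + 1)) K :=
    Matrix.of (Fin.cons (fun l => if l = 0 then 1 else 0)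
      (fun i l => (if l = i.succ then 1 else 0) - c i l))
  let M : Matrix (Fin (m + 1)) (Fin (m + 1)) K := Matrix.of fun i j => D^[(i : ℕ)] (F j)
  have hT : T.det = 1 := by
    rw [Matrix.det_of_isLowerTriangular]
    · apply Finset.prod_eq_one
      intro i _
      refine Fin.cases ?_ (fun i => ?_) i
      · simp [T]
      · simp [T, hc0]
    · intro i j hij
      have hij : i < j := hij
      revert hij
      refine Fin.cases ?_ (fun i => ?_) i
      · intro hij
        have : j ≠ 0 := by
          rintro rfl; simp at hij
        simp [T, this]
      · intro hij
        have h1 : j ≠ i.succ := ne_of_gt hij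
        have h2 : (i : ℕ) < j := by
          have := Fin.lt_def.mp hij
          simp at this; omega
        simp [T, h1, hc0 _ _ h2]
  have hTM0 : ∀ j, (T * M) 0 j = F j := by
    intro j
    simp [Matrix.mul_apply, T, M]
  have hTMs : ∀ i : Fin m, ∀ j, (T * M) i.succ j = D^[(i : ℕ)] (D (F j) - s * F j) := by
    intro i j
    rw [hc]
    simp only [Matrix.mul_apply, T, M, Matrix.of_apply, Fin.cons_succ, sub_mul,
      Finset.sum_sub_distrib]
    congr 1
    · simp
    · rw [Fin.sum_univ_eq_sum_range (fun l => c i l * D^[l] (F j)) (m + 1)]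
      symm
      apply Finset.sum_subset
      · intro l hl
        simp at hl ⊢
        have := i.2
        omega
      · intro l _ hl
        simp at hl
        rw [hc0 _ _ (by omega), zero_mul]
  have hdet : WrK D F = (T * M).det := by
    rw [Matrix.det_mul, hT, one_mul]; rfl
  rw [hdet, Matrix.det_succ_column_zero, Fin.sum_univ_succ]
  rw [Finset.sum_eq_zero, add_zero]
  · rw [hTM0]
    simp only [Fin.val_zero, pow_zero, one_mul]
    congr 1
    unfold WrK
    congr 1
    ext i j
    simp only [Matrix.submatrix_apply, Matrix.of_apply, Fin.succAbove_zero]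
    rw [hTMs]
  · intro i _
    rw [hTMs]
    have : D (F 0) - s * F 0 = 0 := by rw [hs]; field_simp; ring
    rw [this, iterate_map_zero]
    ring

theorem WrK_ne_zero_head {m : ℕ} (F : Fin (m + 1) → K) (h : WrK D F ≠ 0) : F 0 ≠ 0 := by
  intro h0
  apply h
  apply Matrix.det_eq_zero_of_column_eq_zero 0
  intro i
  simp [h0, iterate_map_zero]

theorem darboux_step (a b k k1 f g : K) (hf0 : f ≠ 0)
    (hf : D (D f) = a * D f + (b - k1) * f) (hg : D (D g) = a * D g + (b - k) * g)
    (hk : D k = 0) (hk1 : D k1 = 0) :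
    D (D (D g - D f / f * g)) = a * D (D g - D f / f * g) +
      (D a - D (D f / f) + k1 - a * (D f / f) + (D f / f) ^ 2 - k) * (D g - D f / f * g) := by
  set s := D f / f with hs
  have hs' : D s = a * s + b - k1 - s ^ 2 := by
    rw [hs, Derivation.leibniz_div]
    simp only [smul_eq_mul]
    rw [hf]
    field_simp
    ring
  have hy : D (D g - s * g) = (a - s) * (D g - s * g) + (k1 - k) * g := by
    rw [map_sub, Derivation.leibniz, hg, hs']
    simp only [smul_eq_mul]
    ring
  generalize hyy : D g - s * g = y at *
  have hDg : D g = y + s * g := by rw [← hyy]; ring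
  have h2 : D (D y) = (D a - D s) * y + (a - s) * D y + (k1 - k) * D g := by
    conv_lhs => rw [hy]
    simp only [map_add, map_sub, Derivation.leibniz, smul_eq_mul, hk, hk1]
    ring
  rw [h2, hDg, hy]
  ring

theorem crum (r : ℕ) : ∀ (a b : K) (f : Fin r → K) (k : Fin r → K),
    (∀ i, D (k i) = 0) → (∀ i, D (D (f i)) = a * D (f i) + (b - k i) * f i) →
    WrK D f ≠ 0 →
    ∃ b' : K, ∀ g l : K, D l = 0 → D (D g) = a * D g + (b - l) * g →
      ∀ y, y = WrK D (Fin.snoc f g : Fin (r + 1) → K) / WrK D f →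
      D (D y) = a * D y + (b' - l) * y := by
  induction r with
  | zero =>
    intro a b f k _ _ _
    refine ⟨b, ?_⟩
    intro g l _ hg y hy
    have : y = g := by
      rw [hy]
      simp [WrK, Fin.snoc]
    rw [this, hg]
  | succ r ih =>
    intro a b f k hk hf hW
    have h0 := WrK_ne_zero_head D f hW
    have hWf := WrK_succ D f h0
    set f' : Fin r → K := fun j => D (f j.succ) - D (f 0) / f 0 * f j.succ with hf'
    have hW' : WrK D f' ≠ 0 := by
      intro h; apply hW; rw [hWf, h, mul_zero]
    obtain ⟨b', hb'⟩ := ih a (D a - D (D (f 0) / f 0) + k 0 - a * (D (f 0) / f 0)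
      + (D (f 0) / f 0) ^ 2) f' (fun j => k j.succ) (fun j => hk _)
      (fun j => darboux_step D a b _ _ _ _ h0 (hf 0) (hf j.succ) (hk _) (hk _)) hW'
    refine ⟨b', ?_⟩
    intro g l hl hg y hy
    apply hb' (D g - D (f 0) / f 0 * g) l hl
      (darboux_step D a b _ _ _ _ h0 (hf 0) hg hl (hk _))
    rw [hy]
    have e0 : (Fin.snoc f g : Fin (r + 2) → K) 0 = f 0 := by
      rw [← Fin.castSucc_zero, Fin.snoc_castSucc]
    have hWg := WrK_succ D (Fin.snoc f g : Fin (r + 2) → K) (by rw [e0]; exact h0)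
    rw [hWg, hWf, e0, mul_div_mul_left _ _ h0]
    congr 2
    ext j
    refine Fin.lastCases ?_ (fun j => ?_) j
    · rw [Fin.succ_last, Fin.snoc_last, Fin.snoc_last]
    · rw [Fin.succ_castSucc, Fin.snoc_castSucc, Fin.snoc_castSucc]

end Crum

/-! ### The derivation on the fraction field -/

section Frac

variable (K : Type*) [Field K] [Algebra ℝ[X] K]

/-- The ring map into dual numbers given by a polynomial and its derivative. -/
noncomputable def dualHom : ℝ[X] →+* TrivSqZeroExt K K where
  toFun p := TrivSqZeroExt.inl (algebraMap ℝ[X] K p) +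
    TrivSqZeroExt.inr (algebraMap ℝ[X] K (derivative p))
  map_one' := by
    ext <;> simp
  map_zero' := by
    ext <;> simp
  map_add' p q := by
    ext <;> simp [Algebra.smul_def]
  map_mul' p q := by
    ext
    · simp
    · simp only [derivative_mul, map_add, map_mul, smul_eq_mul, MulOpposite.smul_eq_mul_unop,
        MulOpposite.unop_op, TrivSqZeroExt.snd_add, TrivSqZeroExt.fst_add, TrivSqZeroExt.snd_inl, TrivSqZeroExt.snd_inr,
        TrivSqZeroExt.fst_inl, TrivSqZeroExt.fst_inr, TrivSqZeroExt.snd_mul, zero_add, add_zero]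
      ring

theorem dualHom_fst (p : ℝ[X]) : (dualHom K p).fst = algebraMap ℝ[X] K p := by
  simp [dualHom]

theorem dualHom_snd (p : ℝ[X]) :
    (dualHom K p).snd = algebraMap ℝ[X] K (derivative p) := by
  change (TrivSqZeroExt.inl (algebraMap ℝ[X] K p) +
    TrivSqZeroExt.inr (algebraMap ℝ[X] K (derivative p)) : TrivSqZeroExt K K).snd = _
  rw [TrivSqZeroExt.snd_add, TrivSqZeroExt.snd_inl, TrivSqZeroExt.snd_inr, zero_add]

variable [IsFractionRing ℝ[X] K]

theorem dualHom_unit (y : nonZeroDivisors ℝ[X]) : IsUnit (dualHom K y) := by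
  rw [TrivSqZeroExt.isUnit_iff_isUnit_fst, dualHom_fst]
  exact IsLocalization.map_units _ y

/-- The extension of `dualHom` to the fraction field. -/
noncomputable def dualLift : K →+* TrivSqZeroExt K K :=
  IsLocalization.lift (M := nonZeroDivisors ℝ[X]) (dualHom_unit K)

theorem dualLift_algebraMap (p : ℝ[X]) :
    dualLift K (algebraMap ℝ[X] K p) = dualHom K p :=
  IsLocalization.lift_eq _ _

theorem dualLift_fst (x : K) : (dualLift K x).fst = x := by
  have : ((TrivSqZeroExt.fstHom ℤ K K).toRingHom.comp (dualLift K)) = RingHom.id _ := by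
    apply IsLocalization.ringHom_ext (nonZeroDivisors ℝ[X])
    ext p
    · simp [dualLift_algebraMap, dualHom_fst]
    · simp [dualLift_algebraMap, dualHom_fst]
  exact congrArg (fun h => h x) this

/-- The derivation on the fraction field. -/
noncomputable def fracD : Derivation ℤ K K :=
  Derivation.mk'
    (AddMonoidHom.toIntLinearMap
      { toFun := fun x => (dualLift K x).snd
        map_zero' := by simp
        map_add' := by intro x y; simp })
    (by
      intro x y
      simp [TrivSqZeroExt.snd_mul, dualLift_fst, mul_comm])

theorem fracD_algebraMap (p : ℝ[X]) :
    fracD K (algebraMap ℝ[X] K p) = algebraMap ℝ[X] K (derivative p) := by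
  change (dualLift K _).snd = _
  rw [dualLift_algebraMap, dualHom_snd]

theorem fracD_iterate (p : ℝ[X]) (i : ℕ) :
    (fracD K)^[i] (algebraMap ℝ[X] K p) =
      algebraMap ℝ[X] K ((fun p => derivative p)^[i] p) := by
  induction i with
  | zero => rfl
  | succ i ih =>
    rw [Function.iterate_succ_apply', ih, fracD_algebraMap, Function.iterate_succ_apply']

theorem WrK_algebraMap {m : ℕ} (f : Fin m → ℝ[X]) :
    WrK (fracD K) (fun i => algebraMap ℝ[X] K (f i)) = algebraMap ℝ[X] K (Wron f) := by
  unfold WrK Wron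
  rw [RingHom.map_det]
  congr 1
  ext i j
  simp [fracD_iterate]

end Frac

theorem bilinear_identity_aux (K : Type*) [Field K] [Algebra ℝ[X] K] [IsFractionRing ℝ[X] K]
    (r : ℕ) (lam : Fin r → ℕ) (n m : ℕ) (hH : genHermite r lam ≠ 0) :
    ∃ V : ℝ[X], derivative V * genHermite r lam - 2 * V * derivative (genHermite r lam)
      - 2 * X * V * genHermite r lam =
      C (2 * ((m + r - ∑ i, lam i : ℕ) : ℝ) - 2 * ((n + r - ∑ i, lam i : ℕ) : ℝ)) *
        (XHermite r lam n * XHermite r lam m) * genHermite r lam := by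
  set φ := algebraMap ℝ[X] K with hφ
  have hinj : Function.Injective φ := IsFractionRing.injective _ _
  have hD : ∀ p, (fracD K) (φ p) = φ (derivative p) := fracD_algebraMap K
  have hode : ∀ j : ℕ, (fracD K) ((fracD K) (φ (physHermite j))) = φ (2 * X) * (fracD K) (φ (physHermite j))
      + (0 - φ (C (2 * (j : ℝ)))) * φ (physHermite j) := by
    intro j
    rw [hD, hD, physHermite_ode]
    simp only [map_sub, map_mul]
    ring
  have hconst : ∀ c : ℝ, (fracD K) (φ (C c)) = 0 := by
    intro c; rw [hD]; simp
  have hWH : WrK (fracD K) (fun j : Fin r => φ (physHermite (lam (Fin.rev j) + j))) =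
      φ (genHermite r lam) := WrK_algebraMap K _
  have hH' : φ (genHermite r lam) ≠ 0 := by
    rwa [Ne, map_eq_zero_iff φ hinj]
  obtain ⟨b, hb⟩ := crum (fracD K) r (φ (2 * X)) 0
    (fun j : Fin r => φ (physHermite (lam (Fin.rev j) + j)))
    (fun j => φ (C (2 * ((lam (Fin.rev j) + j : ℕ) : ℝ))))
    (fun j => hconst _) (fun j => hode _) (by rw [hWH]; exact hH')
  have hX : ∀ n, WrK (fracD K) (Fin.snoc (fun j : Fin r => φ (physHermite (lam (Fin.rev j) + j)))
      (φ (physHermite (n + r - ∑ i, lam i))) : Fin (r + 1) → K) =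
      φ (XHermite r lam n) := by
    intro n
    rw [XHermite, hφ, ← WrK_algebraMap]
    congr 1
    ext j
    refine Fin.lastCases ?_ (fun j => ?_) j
    · simp
    · simp
  have hn := hb _ _ (hconst _) (hode (n + r - ∑ i, lam i)) _ rfl
  have hm := hb _ _ (hconst _) (hode (m + r - ∑ i, lam i)) _ rfl
  rw [hX, hWH] at hn hm
  set P := XHermite r lam n
  set Q := XHermite r lam m
  set H := genHermite r lam
  set y := φ P / φ H with hy
  set z := φ Q / φ H with hz
  have hW : (fracD K) ((fracD K) y * z - y * (fracD K) z) - φ (2 * X) * ((fracD K) y * z - y * (fracD K) z) =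
      φ (C (2 * ((m + r - ∑ i, lam i : ℕ) : ℝ) - 2 * ((n + r - ∑ i, lam i : ℕ) : ℝ))) *
        (y * z) := by
    rw [map_sub, Derivation.leibniz, Derivation.leibniz, hn, hm, C_sub, map_sub φ]
    simp only [smul_eq_mul]
    ring
  have hyD : (fracD K) y = (φ (derivative P) * φ H - φ P * φ (derivative H)) / φ H ^ 2 := by
    rw [hy, Derivation.leibniz_div, hD, hD]
    simp only [smul_eq_mul]
    field_simp
  have hzD : (fracD K) z = (φ (derivative Q) * φ H - φ Q * φ (derivative H)) / φ H ^ 2 := by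
    rw [hz, Derivation.leibniz_div, hD, hD]
    simp only [smul_eq_mul]
    field_simp
  have hV : (fracD K) y * z - y * (fracD K) z =
      φ (derivative P * Q - P * derivative Q) / φ (H ^ 2) := by
    rw [hyD, hzD, hy, hz]
    simp only [map_sub, map_mul, map_pow]
    field_simp
    ring
  refine ⟨derivative P * Q - P * derivative Q, ?_⟩
  rw [hV] at hW
  generalize derivative P * Q - P * derivative Q = V at hW ⊢
  rw [Derivation.leibniz_div, hD, hD, derivative_sq] at hW
  apply hinj
  rw [hy, hz] at hW
  generalize C (2 * ((m + r - ∑ i, lam i : ℕ) : ℝ) - 2 * ((n + r - ∑ i, lam i : ℕ) : ℝ)) = c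
    at hW ⊢
  have h2 : φ (C 2) = 2 := by
    have : (C 2 : ℝ[X]) = 2 := rfl
    rw [this, map_ofNat]
  simp only [smul_eq_mul, map_sub, map_mul, map_pow, map_ofNat] at hW ⊢
  field_simp at hW
  linear_combination hW

theorem bilinear_identity (r : ℕ) (lam : Fin r → ℕ) (n m : ℕ) (hH : genHermite r lam ≠ 0) :
    ∃ V : ℝ[X], derivative V * genHermite r lam - 2 * V * derivative (genHermite r lam)
      - 2 * X * V * genHermite r lam =
      C (2 * ((m + r - ∑ i, lam i : ℕ) : ℝ) - 2 * ((n + r - ∑ i, lam i : ℕ) : ℝ)) *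
        (XHermite r lam n * XHermite r lam m) * genHermite r lam :=
  bilinear_identity_aux (FractionRing ℝ[X]) r lam n m hH

/-! ### Analysis -/

theorem hasDerivAt_quot (A B : ℝ[X]) (t : ℝ) (hB : B.eval t ≠ 0) :
    HasDerivAt (fun t => A.eval t / B.eval t * Real.exp (-t ^ 2))
      ((derivative A * B - A * derivative B - 2 * X * A * B).eval t / (B.eval t) ^ 2 *
        Real.exp (-t ^ 2)) t := by
  have h1 := (A.hasDerivAt t).div (B.hasDerivAt t) hB
  have h2 : HasDerivAt (fun t : ℝ => Real.exp (-t ^ 2)) (Real.exp (-t ^ 2) * (-(2 * t))) t := by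
    have h3 : HasDerivAt (fun t : ℝ => -t ^ 2) (-(2 * t)) t := by
      have h4 := (hasDerivAt_pow 2 t).neg
      simp only [Nat.cast_ofNat, Nat.add_one_sub_one, pow_one] at h4
      exact h4
    exact h3.exp
  refine (h1.mul h2).congr_deriv ?_
  simp only [eval_sub, eval_mul, eval_X, eval_ofNat, Pi.div_apply]
  field_simp
  ring

theorem poly_exp_tendsto_top (A : ℝ[X]) :
    Filter.Tendsto (fun t : ℝ => A.eval t * Real.exp (-t ^ 2)) Filter.atTop (nhds 0) := by
  have h1 : Filter.Tendsto (fun t : ℝ => A.eval t / Real.exp t) Filter.atTop (nhds 0) :=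
    A.tendsto_div_exp_atTop
  refine squeeze_zero_norm' ?_ (by simpa using h1.norm)
  filter_upwards [Filter.eventually_ge_atTop 1] with t ht
  rw [norm_mul, div_eq_mul_inv, Real.norm_eq_abs, Real.norm_eq_abs, Real.abs_exp,
    ← Real.exp_neg]
  apply mul_le_mul_of_nonneg_left _ (abs_nonneg _)
  apply Real.exp_le_exp.mpr
  nlinarith

theorem quot_exp_tendsto_top (A B : ℝ[X]) (hB : B ≠ 0) :
    Filter.Tendsto (fun t : ℝ => A.eval t / B.eval t * Real.exp (-t ^ 2))
      Filter.atTop (nhds 0) := by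
  obtain ⟨c, hc, hcB⟩ : ∃ c > 0, ∀ᶠ t in Filter.atTop, c ≤ |B.eval t| := by
    by_cases hd : 0 < B.degree
    · exact ⟨1, one_pos, (B.abs_tendsto_atTop hd).eventually_ge_atTop 1⟩
    · have h := eq_C_of_degree_le_zero (not_lt.mp hd)
      have h0 : B.coeff 0 ≠ 0 := by
        intro h0; rw [h0] at h; exact hB (by simpa using h)
      refine ⟨|B.coeff 0|, abs_pos.mpr h0, Filter.Eventually.of_forall fun t => ?_⟩
      rw [h]; simp
  have h1 := ((poly_exp_tendsto_top A).norm).const_mul (1 / c)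
  simp only [norm_zero, mul_zero] at h1
  refine squeeze_zero_norm' ?_ h1
  filter_upwards [hcB] with t ht
  rw [div_mul_eq_mul_div, norm_div, div_eq_mul_one_div, mul_comm (1 / c)]
  apply mul_le_mul_of_nonneg_left _ (norm_nonneg _)
  exact one_div_le_one_div_of_le hc ht

theorem quot_exp_tendsto_bot (A B : ℝ[X]) (hB : B ≠ 0) :
    Filter.Tendsto (fun t : ℝ => A.eval t / B.eval t * Real.exp (-t ^ 2))
      Filter.atBot (nhds 0) := by
  have hB' : B.comp (-X) ≠ 0 := by
    intro h
    apply hB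
    have := congrArg (fun p => p.comp (-X)) h
    simpa [comp_assoc] using this
  have h := (quot_exp_tendsto_top (A.comp (-X)) (B.comp (-X)) hB').comp
    Filter.tendsto_neg_atBot_atTop
  refine h.congr fun t => ?_
  simp

theorem integral_zero_of_identity (H Q V : ℝ[X]) (c : ℝ) (hc : c ≠ 0) (hH : H ≠ 0)
    (hV : derivative V * H - 2 * V * derivative H - 2 * X * V * H = C c * Q * H) :
    ∫ t : ℝ, Q.eval t * (Real.exp (-t ^ 2) / (H.eval t) ^ 2) = 0 := by
  by_cases hfint : MeasureTheory.Integrable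
      (fun t : ℝ => Q.eval t * (Real.exp (-t ^ 2) / (H.eval t) ^ 2))
  swap
  · exact MeasureTheory.integral_undef hfint
  obtain ⟨A, B, g, hg, hcop, hVg, hHg⟩ : ∃ A B g : ℝ[X], g ≠ 0 ∧ IsCoprime A B ∧
      V = g * A ∧ H ^ 2 = g * B := by
    have hH2 : H ^ 2 ≠ 0 := pow_ne_zero 2 hH
    obtain ⟨A, hA⟩ := EuclideanDomain.gcd_dvd_left V (H ^ 2)
    obtain ⟨B, hB⟩ := EuclideanDomain.gcd_dvd_right V (H ^ 2)
    have hg : EuclideanDomain.gcd V (H ^ 2) ≠ 0 := by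
      intro h; rw [h, zero_mul] at hB; exact hH2 hB
    refine ⟨A, B, _, hg, ?_, hA, hB⟩
    have h := EuclideanDomain.gcd_eq_gcd_ab V (H ^ 2)
    refine ⟨EuclideanDomain.gcdA V (H ^ 2), EuclideanDomain.gcdB V (H ^ 2), ?_⟩
    apply mul_left_cancel₀ hg
    generalize EuclideanDomain.gcd V (H ^ 2) = d at *
    generalize EuclideanDomain.gcdA V (H ^ 2) = a at *
    generalize EuclideanDomain.gcdB V (H ^ 2) = b at *
    linear_combination -h - a * hA - b * hB
  have hB0 : B ≠ 0 := by
    rintro rfl; rw [mul_zero] at hHg; exact pow_ne_zero 2 hH hHg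
  have hid : g * (derivative A * B - A * derivative B - 2 * X * A * B) = C c * Q * B := by
    apply mul_left_cancel₀ hg
    have h1 : derivative V = derivative g * A + g * derivative A := by rw [hVg, derivative_mul]
    have h2 : 2 * H * derivative H = derivative g * B + g * derivative B := by
      rw [← derivative_mul, ← hHg, derivative_sq]; rfl
    have h3 : derivative V * H ^ 2 - V * (2 * H * derivative H) - 2 * X * V * H ^ 2 =
      C c * Q * H ^ 2 := by linear_combination H * hV
    rw [h1, h2, hHg, hVg] at h3
    linear_combination h3
  -- the derivative away from the zeros of `H`
  have hder : ∀ t, H.eval t ≠ 0 →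
      (derivative A * B - A * derivative B - 2 * X * A * B).eval t / (B.eval t) ^ 2 *
        Real.exp (-t ^ 2) = c * (Q.eval t * (Real.exp (-t ^ 2) / (H.eval t) ^ 2)) := by
    intro t ht
    have e1 := congrArg (eval t) hHg
    have e2 := congrArg (eval t) hid
    rw [eval_mul] at e2
    generalize (derivative A * B - A * derivative B - 2 * X * A * B).eval t = w at e2 ⊢
    simp only [eval_pow, eval_mul, eval_C] at e1 e2
    have hgB : g.eval t * B.eval t ≠ 0 := by rw [← e1]; exact pow_ne_zero 2 ht
    have hgt := left_ne_zero_of_mul hgB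
    have hBt := right_ne_zero_of_mul hgB
    rw [e1]
    field_simp
    linear_combination e2
  have hBH : ∀ t, H.eval t ≠ 0 → B.eval t ≠ 0 := by
    intro t ht hb
    have e1 := congrArg (eval t) hHg
    simp only [eval_pow, eval_mul, hb, mul_zero] at e1
    exact pow_ne_zero 2 ht e1
  have hfin : {t : ℝ | H.eval t = 0}.Finite := by
    refine (H.roots.toFinset.finite_toSet).subset fun t ht => ?_
    simpa [hH] using ht
  -- `B` has no real zeros
  have hBne : ∀ t, B.eval t ≠ 0 := by
    intro t0 hb
    have hA0 : A.eval t0 ≠ 0 := by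
      intro ha
      obtain ⟨u, v, huv⟩ := hcop
      have := congrArg (eval t0) huv
      simp [ha, hb] at this
    obtain ⟨δ, hδ, hδH⟩ : ∃ δ > 0, ∀ t, t0 < t → t ≤ t0 + δ → H.eval t ≠ 0 := by
      have h1 : ∀ᶠ t in nhdsWithin t0 (Set.Ioi t0), H.eval t ≠ 0 := by
        have h2 : ∀ᶠ t in nhdsWithin t0 {t0}ᶜ, t ∈ {t : ℝ | H.eval t = 0}ᶜ := by
          have h3 : IsClosed ({t : ℝ | H.eval t = 0} \ {t0}) :=
            (hfin.subset Set.sdiff_subset).isClosed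
          have h4 : ({t : ℝ | H.eval t = 0} \ {t0})ᶜ ∈ nhds t0 :=
            h3.isOpen_compl.mem_nhds (by simp)
          filter_upwards [mem_nhdsWithin_of_mem_nhds h4, self_mem_nhdsWithin] with t h5 h6 h7
          exact h5 ⟨h7, h6⟩
        exact nhdsWithin_mono t0 (fun t ht => ne_of_gt ht) h2
      obtain ⟨u, hu, hsub⟩ := (mem_nhdsGT_iff_exists_Ioc_subset).mp h1
      refine ⟨u - t0, sub_pos.mpr hu, fun t h1 h2 => hsub ⟨h1, by linarith⟩⟩
    set F : ℝ → ℝ := fun t => A.eval t / B.eval t * Real.exp (-t ^ 2) with hF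
    set f : ℝ → ℝ := fun t => Q.eval t * (Real.exp (-t ^ 2) / (H.eval t) ^ 2) with hf
    have hbound : ∀ t, t0 < t → t ≤ t0 + δ →
        |F t| ≤ |F (t0 + δ)| + |c| * ∫ s, ‖f s‖ := by
      intro t h1 h2
      have hI : ∫ s in t..(t0 + δ), c * f s = F (t0 + δ) - F t := by
        apply intervalIntegral.integral_eq_sub_of_hasDerivAt
        · intro s hs
          rw [Set.uIcc_of_le h2] at hs
          have hHs := hδH s (lt_of_lt_of_le h1 hs.1) hs.2
          rw [← hder s hHs]
          exact hasDerivAt_quot A B s (hBH s hHs)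
        · exact (hfint.const_mul c).intervalIntegrable
      have hI2 : |∫ s in t..(t0 + δ), c * f s| ≤ |c| * ∫ s, ‖f s‖ := by
        rw [intervalIntegral.integral_const_mul, abs_mul]
        apply mul_le_mul_of_nonneg_left _ (abs_nonneg _)
        rw [intervalIntegral.integral_of_le h2]
        refine (MeasureTheory.norm_integral_le_integral_norm f).trans ?_
        exact MeasureTheory.setIntegral_le_integral hfint.norm
          (Filter.Eventually.of_forall fun s => norm_nonneg _)
      rw [hI] at hI2
      have := abs_sub_abs_le_abs_sub (F t) (F (t0 + δ))
      rw [abs_sub_comm] at this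
      linarith
    set M := |F (t0 + δ)| + |c| * ∫ s, ‖f s‖
    have hlim : |A.eval t0| * Real.exp (-t0 ^ 2) ≤ M * |B.eval t0| := by
      have c1 : Continuous fun t => |A.eval t| * Real.exp (-t ^ 2) := by
        have := A.continuous
        fun_prop
      have c2 : Continuous fun t => M * |B.eval t| := by
        have := B.continuous
        fun_prop
      refine le_of_tendsto_of_tendsto (b := nhdsWithin t0 (Set.Ioi t0))
        (c1.continuousAt.tendsto.mono_left nhdsWithin_le_nhds)
        (c2.continuousAt.tendsto.mono_left nhdsWithin_le_nhds) ?_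
      filter_upwards [Ioc_mem_nhdsGT (show t0 < t0 + δ by linarith)] with t ht
      have h1 := hbound t ht.1 ht.2
      have h2 := abs_pos.mpr (hBH t (hδH t ht.1 ht.2))
      rw [hF] at h1
      simp only [abs_mul, abs_div, Real.abs_exp] at h1
      rw [div_mul_eq_mul_div, div_le_iff₀ h2] at h1
      exact h1
    rw [hb, abs_zero, mul_zero] at hlim
    have : 0 < |A.eval t0| * Real.exp (-t0 ^ 2) :=
      mul_pos (abs_pos.mpr hA0) (Real.exp_pos _)
    linarith
  -- conclusion
  have hae : (fun t => (derivative A * B - A * derivative B - 2 * X * A * B).eval t /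
      (B.eval t) ^ 2 * Real.exp (-t ^ 2)) =ᵐ[MeasureTheory.volume]
      fun t => c * (Q.eval t * (Real.exp (-t ^ 2) / (H.eval t) ^ 2)) := by
    have : {t : ℝ | H.eval t = 0}ᶜ ∈ MeasureTheory.ae MeasureTheory.volume :=
      MeasureTheory.compl_mem_ae_iff.mpr (hfin.measure_zero _)
    filter_upwards [this] with t ht
    exact hder t ht
  have hfinal := MeasureTheory.integral_of_hasDerivAt_of_tendsto
    (fun t => hasDerivAt_quot A B t (hBne t)) ((hfint.const_mul c).congr hae.symm)
    (quot_exp_tendsto_bot A B hB0) (quot_exp_tendsto_top A B hB0)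
  rw [MeasureTheory.integral_congr_ae hae, MeasureTheory.integral_const_mul, sub_zero] at hfinal
  exact (mul_eq_zero.mp hfinal).resolve_left hc

/-- Eq. (9): orthogonality of the exceptional Hermite polynomials. For an even
partition `λ` and `n ≠ m` in `N_λ`,
`∫_{-∞}^{∞} P_n(x) P_m(x) e^{-x²}/H_λ(x)² dx = 0`. -/
theorem XHermite_orthogonality
    (r : ℕ) (lam : Fin r → ℕ) (hpart : IsEvenPartition r lam)
    (n m : ℕ) (hn : XDegSeq r lam n) (hm : XDegSeq r lam m) (hnm : n ≠ m) :
    ∫ t : ℝ, (XHermite r lam n).eval t * (XHermite r lam m).eval t *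
      (Real.exp (-t ^ 2) / ((genHermite r lam).eval t) ^ 2) = 0 := by
  classical
  by_cases hH : genHermite r lam = 0
  · simp [hH]
  obtain ⟨V, hV⟩ := bilinear_identity r lam n m hH
  have hc : 2 * ((m + r - ∑ i, lam i : ℕ) : ℝ) - 2 * ((n + r - ∑ i, lam i : ℕ) : ℝ) ≠ 0 := by
    intro h
    have h1 : ((m + r - ∑ i, lam i : ℕ) : ℝ) = ((n + r - ∑ i, lam i : ℕ) : ℝ) := by linarith
    have h2 : m + r - ∑ i, lam i = n + r - ∑ i, lam i := by exact_mod_cast h1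
    have h3 := hn.1
    have h4 := hm.1
    omega
  have := integral_zero_of_identity _ _ V _ hc hH hV
  simpa only [eval_mul] using this
end
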